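/- arXiv:2208.05633 — 7 statements merged into one kernel-verified Lean document; each statement's English description precedes it below -/
import Mathlib

section
/- Let α and β be probability measures on a measurable space Ω, let L > 0, and let f : Ω → ℝ be a measurable function, integrable with respect to both α and β, satisfying 0 ≤ f(x) ≤ L for all x ∈ Ω. Then KL(α‖β) ≥ (6/(5L²))·(∫ f dα − ∫ f dβ)². -/
/-!
Gibbs' inequality for `α` against the exponential tilt of `β` by `g` is the Donsker–Varadhan bound
`KL(α‖β) ≥ ∫ g dα - log ∫ exp g dβ`. If `X` is sub-Gaussian under `β` with variance proxy `c`,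
taking `g = t X` gives `t ∫ X dα - c t² / 2 ≤ KL(α‖β)` for all real `t`; this quadratic in `t` has
nonpositive discriminant, so `(∫ X dα)² ≤ 2 c KL(α‖β)`. By Hoeffding's lemma, a function with values
in `[a, b]`, centered under `β`, has variance proxy `(b - a)² / 4`, which gives the constant
`2 / (b - a)² ≥ 6 / (5 (b - a)²)`.
-/

open MeasureTheory
open scoped Classical

/-- Kullback–Leibler divergence: `∫ log (dα/dβ) dα` when `α ≪ β` (and the log-likelihood
ratio is integrable), `+∞` otherwise. -/
noncomputable def klDiv {Ω : Type*} [MeasurableSpace Ω] (α β : Measure Ω) : EReal :=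
  if α ≪ β ∧ Integrable (llr α β) α then ((∫ x, llr α β x ∂α : ℝ) : EReal) else ⊤

section

open ProbabilityTheory

variable {Ω : Type*} [MeasurableSpace Ω] {α β : Measure Ω}

lemma coe_le_klDiv_iff {r : ℝ} :
    (r : EReal) ≤ klDiv α β ↔
      (α ≪ β → Integrable (llr α β) α → r ≤ ∫ x, llr α β x ∂α) := by
  unfold klDiv
  split_ifs with h
  · simp [h.1, h.2]
  · simpa using fun hac hint ↦ absurd ⟨hac, hint⟩ h

variable [IsProbabilityMeasure α]

lemma integral_sub_log_integral_exp_le_integral_llr [SigmaFinite β] (hac : α ≪ β)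
    (hint : Integrable (llr α β) α) {g : Ω → ℝ} (hgα : Integrable g α)
    (hgβ : Integrable (fun x ↦ Real.exp (g x)) β) :
    ∫ x, g x ∂α - Real.log (∫ x, Real.exp (g x) ∂β) ≤ ∫ x, llr α β x ∂α := by
  have : NeZero β := ⟨by
    rintro rfl
    exact IsProbabilityMeasure.ne_zero α (Measure.absolutelyContinuous_zero_iff.1 hac)⟩
  have : IsProbabilityMeasure (β.tilted g) := isProbabilityMeasure_tilted hgβ
  have hgibbs := InformationTheory.integral_llr_add_sub_measure_univ_nonneg
    (hac.trans (absolutelyContinuous_tilted hgβ))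
    (integrable_llr_tilted_right hac hgα hint hgβ)
  rw [integral_llr_tilted_right hac hgα hgβ hint] at hgibbs
  simp only [probReal_univ] at hgibbs
  linarith

lemma sq_integral_le_mul_integral_llr_of_hasSubgaussianMGF (hac : α ≪ β)
    (hint : Integrable (llr α β) α) {X : Ω → ℝ} {c : NNReal} (hX : HasSubgaussianMGF X c β)
    (hXα : Integrable X α) :
    (∫ x, X x ∂α) ^ 2 ≤ 2 * c * ∫ x, llr α β x ∂α := by
  have : IsFiniteMeasure β := by
    simpa [integrable_const_iff] using hX.integrable_exp_mul 0
  have hquadratic (t : ℝ) :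
      0 ≤ c / 2 * (t * t) + -(∫ x, X x ∂α) * t + ∫ x, llr α β x ∂α := by
    have hdv := integral_sub_log_integral_exp_le_integral_llr hac hint
      (hXα.const_mul t) (hX.integrable_exp_mul t)
    have hcgf : Real.log (∫ x, Real.exp (t * X x) ∂β) ≤ c * t ^ 2 / 2 := hX.cgf_le t
    rw [integral_const_mul] at hdv
    linarith
  have hdiscrim := discrim_le_zero hquadratic
  rw [discrim] at hdiscrim
  linarith

theorem stmt_0_general [IsProbabilityMeasure β] {a b : ℝ} (hab : a < b) {f : Ω → ℝ}
    (hf : AEMeasurable f β) (hfab : ∀ᵐ x ∂β, f x ∈ Set.Icc a b) :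
    ((2 / (b - a) ^ 2 * (∫ x, f x ∂α - ∫ x, f x ∂β) ^ 2 : ℝ) : EReal) ≤ klDiv α β := by
  refine coe_le_klDiv_iff.2 fun hac hint ↦ ?_
  have hfα : Integrable f α := .of_mem_Icc a b (hf.mono_ac hac) (hac.ae_le hfab)
  have hcentered : ∫ x, (f x - ∫ y, f y ∂β) ∂α = ∫ x, f x ∂α - ∫ x, f x ∂β := by
    simp [integral_sub hfα (integrable_const _)]
  have hsq := sq_integral_le_mul_integral_llr_of_hasSubgaussianMGF hac hint
    (hasSubgaussianMGF_of_mem_Icc hf hfab) (hfα.sub (integrable_const _))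
  have hproxy : (((‖b - a‖₊ / 2) ^ 2 : NNReal) : ℝ) = (b - a) ^ 2 / 4 := by
    simp only [NNReal.coe_pow, NNReal.coe_div, coe_nnnorm, NNReal.coe_ofNat, div_pow,
      Real.norm_eq_abs, sq_abs]
    norm_num
  rw [hcentered, hproxy] at hsq
  rw [div_mul_eq_mul_div, div_le_iff₀ (pow_pos (sub_pos.2 hab) 2)]
  linarith

end

theorem stmt_0 {Ω : Type*} [MeasurableSpace Ω] (α β : Measure Ω)
    [IsProbabilityMeasure α] [IsProbabilityMeasure β]
    (L : ℝ) (hL : 0 < L) (f : Ω → ℝ) (hf : Measurable f)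
    (hfα : Integrable f α) (hfβ : Integrable f β)
    (hf0 : ∀ x, 0 ≤ f x) (hfL : ∀ x, f x ≤ L) :
    ((6 / (5 * L ^ 2) * (∫ x, f x ∂α - ∫ x, f x ∂β) ^ 2 : ℝ) : EReal) ≤ klDiv α β := by
  have hconst : 6 / (5 * L ^ 2) ≤ 2 / (L - 0) ^ 2 := by
    rw [sub_zero, div_le_div_iff₀ (by positivity) (by positivity)]
    nlinarith
  exact (EReal.coe_le_coe (by gcongr)).trans
    (stmt_0_general hL hf.aemeasurable (.of_forall fun x ↦ ⟨hf0 x, hfL x⟩))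
end

section
/- Let d, n ≥ 1 be integers, let φ_1, …, φ_n ∈ ℝ^d with φ_i ≠ 0 for at least one i, let Δ > 0, and let Λ_1, …, Λ_n be real symmetric positive definite d×d matrices. Then the infimum of Σ_{i=1}^n x_iᵀ Λ_i x_i over all x = (x_1, …, x_n) ∈ (ℝ^d)^n satisfying Σ_{i=1}^n |φ_iᵀ x_i| ≥ Δ equals Δ² / (Σ_{i=1}^n φ_iᵀ Λ_i^{-1} φ_i), and this infimum is attained. -/
/-!
Each positive definite `Λ i` defines an inner product, in which `φ i ⬝ᵥ x i` is the inner product of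
`(Λ i)⁻¹ *ᵥ φ i` with `x i`. Cauchy–Schwarz for each `i`, and then once more for the sum over `i`,
bounds `Δ ^ 2` by the product of `∑ i, φ i ⬝ᵥ (Λ i)⁻¹ *ᵥ φ i` and the objective. Equality holds when
every `x i` is the same nonnegative multiple of `(Λ i)⁻¹ *ᵥ φ i`.
-/

open Matrix

section HermitianForm

open RCLike
open scoped ComplexOrder

lemma star_inv_mulVec_dotProduct_mulVec {R m : Type*} [CommRing R] [StarRing R] [Fintype m]
    [DecidableEq m] {M : Matrix m m R} (hM : M.IsHermitian) (hdet : IsUnit M.det) (f x : m → R) :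
    star (M⁻¹ *ᵥ f) ⬝ᵥ M *ᵥ x = star f ⬝ᵥ x := by
  rw [star_mulVec, hM.inv.eq, ← dotProduct_mulVec, mulVec_mulVec, nonsing_inv_mul _ hdet,
    one_mulVec]

variable {𝕜 m : Type*} [RCLike 𝕜] [Fintype m] {M : Matrix m m 𝕜}

lemma norm_star_dotProduct_mulVec_sq_le (hM : M.PosSemidef) (x y : m → 𝕜) :
    ‖star x ⬝ᵥ M *ᵥ y‖ ^ 2 ≤ re (star x ⬝ᵥ M *ᵥ x) * re (star y ⬝ᵥ M *ᵥ y) := by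
  let := M.toSeminormedAddCommGroup hM
  let := M.toInnerProductSpace hM
  have inner_eq (u v : m → 𝕜) : inner 𝕜 u v = star u ⬝ᵥ M *ᵥ v := dotProduct_comm _ _
  have cauchy_schwarz := inner_mul_inner_self_le (𝕜 := 𝕜) x y
  rw [norm_inner_symm y x, ← sq] at cauchy_schwarz
  simpa only [inner_eq] using cauchy_schwarz

variable [DecidableEq m]

lemma norm_star_dotProduct_sq_le (hM : M.PosDef) (f x : m → 𝕜) :
    ‖star f ⬝ᵥ x‖ ^ 2 ≤ re (star f ⬝ᵥ M⁻¹ *ᵥ f) * re (star x ⬝ᵥ M *ᵥ x) := by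
  have hdet : IsUnit M.det := M.isUnit_iff_isUnit_det.1 hM.isUnit
  simpa only [star_inv_mulVec_dotProduct_mulVec hM.isHermitian hdet] using
    norm_star_dotProduct_mulVec_sq_le hM.posSemidef (M⁻¹ *ᵥ f) x

lemma norm_star_dotProduct_smul_inv_mulVec (hM : M.PosSemidef) (f : m → 𝕜) {t : ℝ} (ht : 0 ≤ t) :
    ‖star f ⬝ᵥ t • M⁻¹ *ᵥ f‖ = t * re (star f ⬝ᵥ M⁻¹ *ᵥ f) := by
  have norm_eq_re : ‖star f ⬝ᵥ M⁻¹ *ᵥ f‖ = re (star f ⬝ᵥ M⁻¹ *ᵥ f) := by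
    simpa only [ofReal_re] using
      congrArg re (norm_of_nonneg' (hM.inv.dotProduct_mulVec_nonneg f))
  rw [dotProduct_smul, norm_smul, Real.norm_of_nonneg ht, norm_eq_re]

lemma re_star_dotProduct_mulVec_smul_inv_mulVec (hM : M.PosDef) (f : m → 𝕜) (t : ℝ) :
    re (star (t • M⁻¹ *ᵥ f) ⬝ᵥ M *ᵥ (t • M⁻¹ *ᵥ f)) = t ^ 2 * re (star f ⬝ᵥ M⁻¹ *ᵥ f) := by
  have hdet : IsUnit M.det := M.isUnit_iff_isUnit_det.1 hM.isUnit
  rw [star_smul, star_trivial, mulVec_smul, smul_dotProduct, dotProduct_smul,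
    star_inv_mulVec_dotProduct_mulVec hM.isHermitian hdet, smul_smul, smul_re, sq]

variable {ι : Type*} {κ : ι → Type*} [Fintype ι] [∀ i, Fintype (κ i)]
  {Λ : ∀ i, Matrix (κ i) (κ i) 𝕜}

lemma sum_re_star_dotProduct_mulVec_pos (hΛ : ∀ i, (Λ i).PosDef) {x : ∀ i, κ i → 𝕜}
    (hx : ∃ i, x i ≠ 0) : 0 < ∑ i, re (star (x i) ⬝ᵥ Λ i *ᵥ x i) := by
  obtain ⟨i, hi⟩ := hx
  exact Finset.sum_pos' (fun j _ ↦ (hΛ j).posSemidef.re_dotProduct_nonneg (x j))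
    ⟨i, Finset.mem_univ i, (hΛ i).re_dotProduct_pos hi⟩

variable [∀ i, DecidableEq (κ i)]

lemma sum_norm_star_dotProduct_sq_le (hΛ : ∀ i, (Λ i).PosDef) (φ x : ∀ i, κ i → 𝕜) :
    (∑ i, ‖star (φ i) ⬝ᵥ x i‖) ^ 2 ≤
      (∑ i, re (star (φ i) ⬝ᵥ (Λ i)⁻¹ *ᵥ φ i)) * ∑ i, re (star (x i) ⬝ᵥ Λ i *ᵥ x i) :=
  Finset.sum_sq_le_sum_mul_sum_of_sq_le_mul _
    (fun i _ ↦ (hΛ i).inv.posSemidef.re_dotProduct_nonneg (φ i))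
    (fun i _ ↦ (hΛ i).posSemidef.re_dotProduct_nonneg (x i))
    (fun i _ ↦ norm_star_dotProduct_sq_le (hΛ i) (φ i) (x i))

theorem stmt_1_general (hΛ : ∀ i, (Λ i).PosDef) {φ : ∀ i, κ i → 𝕜} (hφ : ∃ i, φ i ≠ 0) {Δ : ℝ}
    (hΔ : 0 ≤ Δ) :
    IsLeast
      {y : ℝ | ∃ x : ∀ i, κ i → 𝕜,
        Δ ≤ ∑ i, ‖star (φ i) ⬝ᵥ x i‖ ∧ y = ∑ i, re (star (x i) ⬝ᵥ Λ i *ᵥ x i)}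
      (Δ ^ 2 / ∑ i, re (star (φ i) ⬝ᵥ (Λ i)⁻¹ *ᵥ φ i)) := by
  have hS := sum_re_star_dotProduct_mulVec_pos (fun i ↦ (hΛ i).inv) hφ
  set S := ∑ i, re (star (φ i) ⬝ᵥ (Λ i)⁻¹ *ᵥ φ i) with hS_def
  constructor
  · refine ⟨fun i ↦ (Δ / S) • (Λ i)⁻¹ *ᵥ φ i, ?_, ?_⟩
    · simp only [norm_star_dotProduct_smul_inv_mulVec (hΛ _).posSemidef _ (div_nonneg hΔ hS.le),
        ← Finset.mul_sum, ← hS_def, div_mul_cancel₀ _ hS.ne', le_refl]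
    · simp only [re_star_dotProduct_mulVec_smul_inv_mulVec (hΛ _), ← Finset.mul_sum, ← hS_def]
      field_simp
  · rintro _ ⟨x, hx, rfl⟩
    rw [div_le_iff₀' hS]
    calc
      Δ ^ 2 ≤ (∑ i, ‖star (φ i) ⬝ᵥ x i‖) ^ 2 := by gcongr
      _ ≤ S * ∑ i, re (star (x i) ⬝ᵥ Λ i *ᵥ x i) := sum_norm_star_dotProduct_sq_le hΛ φ x

end HermitianForm

theorem stmt_1 {d n : ℕ} (hd : 1 ≤ d) (hn : 1 ≤ n)
    (φ : Fin n → Fin d → ℝ) (hφ : ∃ i, φ i ≠ 0) (Δ : ℝ) (hΔ : 0 < Δ)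
    (Λ : Fin n → Matrix (Fin d) (Fin d) ℝ)
    (hsymm : ∀ i, (Λ i).IsSymm) (hpos : ∀ i, (Λ i).PosDef) :
    IsLeast
      {y : ℝ | ∃ x : Fin n → Fin d → ℝ,
        Δ ≤ ∑ i, |φ i ⬝ᵥ x i| ∧ y = ∑ i, x i ⬝ᵥ (Λ i).mulVec (x i)}
      (Δ ^ 2 / ∑ i, φ i ⬝ᵥ (Λ i)⁻¹.mulVec (φ i)) := by
  simpa only [star_trivial, Real.norm_eq_abs, RCLike.re_to_real] using
    stmt_1_general hpos hφ hΔ.le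
end

section
/- Let M and M' be two linear discounted MDPs on (S, A) with common feature map φ : S×A → ℝ^d and common discount γ ∈ (0,1), with parameters (θ_M, μ_M) and (θ_{M'}, μ_{M'}) respectively, and let π : S → A be any deterministic policy. Then ‖V^π_M − V^π_{M'}‖_∞ ≤ ‖Q^π_M − Q^π_{M'}‖_∞ ≤ (1/(1−γ))·max_{(s,a)∈S×A} |φ(s,a)ᵀ(θ_M − θ_{M'} + γ·Σ_{s'∈S} (μ_M(s') − μ_{M'}(s'))·V^π_M(s'))|. -/
/-!
Let `T` and `T'` be the Bellman backups of `M` and `M'`. Adding and subtracting `T' V` splits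
`Q - Q' = T V - T' V'` into the model error `T V - T' V` and `T' V - T' V'`, which is at most
`γ ‖V - V'‖` because `T'` is a `γ`-contraction. Taking `a = π s` with `s` maximizing `|V - V'|`
bounds `‖V - V'‖` by `1 / (1 - γ)` times the model error, and substituting this back bounds
`Q - Q'`. In a linear MDP a backup is a linear function of the features, so the model error is the
pairing of the features with a difference of weight vectors.
-/

open Matrix Finset

lemma abs_sum_mul_le_sum_abs_mul {ι R : Type*} [Ring R] [LinearOrder R] [IsOrderedRing R]
    (t : Finset ι) (w x : ι → R) {c : R} (hx : ∀ i ∈ t, |x i| ≤ c) :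
    |∑ i ∈ t, w i * x i| ≤ (∑ i ∈ t, |w i|) * c :=
  calc |∑ i ∈ t, w i * x i|
      ≤ ∑ i ∈ t, |w i| * |x i| := by
        simpa only [abs_mul] using abs_sum_le_sum_abs (fun i => w i * x i) t
    _ ≤ ∑ i ∈ t, |w i| * c :=
        sum_le_sum fun i hi => mul_le_mul_of_nonneg_left (hx i hi) (abs_nonneg _)
    _ = (∑ i ∈ t, |w i|) * c := (sum_mul ..).symm

section Algebra

variable {S A R : Type*} [Fintype S]

/-- The Bellman backup `r + γ P V` of a value function `V`, as a function of state and action. The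
weights `p s a` may be arbitrary ring elements. -/
def bellmanBackup [Semiring R] (γ : R) (r : S → A → R) (p : S → A → S → R) (V : S → R)
    (s : S) (a : A) : R :=
  r s a + γ * ∑ s', p s a s' * V s'

/-- `V` and `Q` are value functions of the deterministic policy `π` for the model `(r, p)` with
discount `γ`, that is, they solve its Bellman equations. -/
structure IsPolicyValue [Semiring R] (γ : R) (r : S → A → R) (p : S → A → S → R) (π : S → A)
    (V : S → R) (Q : S → A → R) : Prop where
  q_eq : ∀ s a, Q s a = bellmanBackup γ r p V s a
  v_eq : ∀ s, V s = Q s (π s)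

/-- The model `(r, p)` is linear in the features `φ`, with reward parameter `θ` and transition
parameters `μ`. -/
structure IsLinearModel {ι : Type*} [Fintype ι] [Semiring R] (φ : S → A → ι → R) (r : S → A → R)
    (p : S → A → S → R) (θ : ι → R) (μ : S → ι → R) : Prop where
  reward_eq : ∀ s a, r s a = φ s a ⬝ᵥ θ
  transition_eq : ∀ s a s', p s a s' = φ s a ⬝ᵥ μ s'

lemma bellmanBackup_sub [Ring R] (γ : R) (r : S → A → R) (p : S → A → S → R) (V V' : S → R)
    (s : S) (a : A) :
    bellmanBackup γ r p V s a - bellmanBackup γ r p V' s a =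
      γ * ∑ s', p s a s' * (V s' - V' s') := by
  simp only [bellmanBackup, add_sub_add_left_eq_sub, ← mul_sub, ← sum_sub_distrib]

namespace IsLinearModel

variable {ι : Type*} [Fintype ι] [CommRing R] {φ : S → A → ι → R} {r r' : S → A → R}
  {p p' : S → A → S → R} {θ θ' : ι → R} {μ μ' : S → ι → R}

lemma bellmanBackup_eq_dotProduct (h : IsLinearModel φ r p θ μ) (γ : R) (V : S → R) (s : S)
    (a : A) :
    bellmanBackup γ r p V s a = φ s a ⬝ᵥ (θ + γ • ∑ s', V s' • μ s') := by
  simp only [bellmanBackup, h.reward_eq, h.transition_eq, dotProduct_add, dotProduct_smul,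
    dotProduct_sum, smul_eq_mul, mul_comm (V _)]

lemma bellmanBackup_sub_eq_dotProduct (h : IsLinearModel φ r p θ μ)
    (h' : IsLinearModel φ r' p' θ' μ') (γ : R) (V : S → R) (s : S) (a : A) :
    bellmanBackup γ r p V s a - bellmanBackup γ r' p' V s a =
      φ s a ⬝ᵥ fun i => θ i - θ' i + γ * ∑ s', (μ s' i - μ' s' i) * V s' := by
  rw [h.bellmanBackup_eq_dotProduct, h'.bellmanBackup_eq_dotProduct, ← dotProduct_sub]
  congr 1 with i
  simp only [Pi.sub_apply, Pi.add_apply, Pi.smul_apply, Finset.sum_apply, smul_eq_mul, sub_mul,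
    sum_sub_distrib, mul_comm (V _)]
  ring

end IsLinearModel

end Algebra

lemma abs_bellmanBackup_sub_le {S A R : Type*} [Fintype S] [Ring R] [LinearOrder R]
    [IsOrderedRing R] {γ : R} (hγ : 0 ≤ γ) (r : S → A → R) {p : S → A → S → R} {s : S} {a : A}
    (hp : ∑ s', |p s a s'| ≤ 1) {V V' : S → R} {D : R} (hD : ∀ s, |V s - V' s| ≤ D) :
    |bellmanBackup γ r p V s a - bellmanBackup γ r p V' s a| ≤ γ * D := by
  have hD_nonneg : 0 ≤ D := (abs_nonneg _).trans (hD s)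
  rw [bellmanBackup_sub, abs_mul, abs_of_nonneg hγ]
  refine mul_le_mul_of_nonneg_left ?_ hγ
  calc |∑ s', p s a s' * (V s' - V' s')|
      ≤ (∑ s', |p s a s'|) * D := abs_sum_mul_le_sum_abs_mul _ _ _ fun s' _ => hD s'
    _ ≤ D := mul_le_of_le_one_left hD_nonneg hp

namespace IsPolicyValue

variable {S A 𝕜 : Type*} [Fintype S] [Field 𝕜] [LinearOrder 𝕜] [IsStrictOrderedRing 𝕜]
  {γ : 𝕜} {r r' : S → A → 𝕜} {p p' : S → A → S → 𝕜} {π : S → A} {V V' : S → 𝕜}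
  {Q Q' : S → A → 𝕜} {E : 𝕜}

lemma abs_q_sub_le_add (h : IsPolicyValue γ r p π V Q) (h' : IsPolicyValue γ r' p' π V' Q')
    (hγ : 0 ≤ γ) {s : S} {a : A} (hp' : ∑ s', |p' s a s'| ≤ 1)
    (hE : |bellmanBackup γ r p V s a - bellmanBackup γ r' p' V s a| ≤ E)
    {D : 𝕜} (hD : ∀ s, |V s - V' s| ≤ D) :
    |Q s a - Q' s a| ≤ E + γ * D := by
  rw [h.q_eq, h'.q_eq]
  exact (abs_sub_le _ (bellmanBackup γ r' p' V s a) _).trans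
    (add_le_add hE (abs_bellmanBackup_sub_le hγ r' hp' hD))

lemma abs_v_sub_le_div (h : IsPolicyValue γ r p π V Q) (h' : IsPolicyValue γ r' p' π V' Q')
    (hγ0 : 0 ≤ γ) (hγ1 : γ < 1) (hp' : ∀ s, ∑ s', |p' s (π s) s'| ≤ 1)
    (hE : ∀ s, |bellmanBackup γ r p V s (π s) - bellmanBackup γ r' p' V s (π s)| ≤ E) (s : S) :
    |V s - V' s| ≤ E / (1 - γ) := by
  have : Nonempty S := ⟨s⟩
  obtain ⟨s₀, hmax⟩ := Finite.exists_max fun s => |V s - V' s|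
  have hself : |V s₀ - V' s₀| ≤ E + γ * |V s₀ - V' s₀| := by
    simpa only [← h.v_eq, ← h'.v_eq] using h.abs_q_sub_le_add h' hγ0 (hp' s₀) (hE s₀) hmax
  refine (hmax s).trans ?_
  rw [le_div_iff₀ (sub_pos.2 hγ1)]
  linarith

lemma abs_q_sub_le_div (h : IsPolicyValue γ r p π V Q) (h' : IsPolicyValue γ r' p' π V' Q')
    (hγ0 : 0 ≤ γ) (hγ1 : γ < 1) (hp' : ∀ s a, ∑ s', |p' s a s'| ≤ 1)
    (hE : ∀ s a, |bellmanBackup γ r p V s a - bellmanBackup γ r' p' V s a| ≤ E) (s : S) (a : A) :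
    |Q s a - Q' s a| ≤ E / (1 - γ) := by
  have hV : ∀ s, |V s - V' s| ≤ E / (1 - γ) :=
    h.abs_v_sub_le_div h' hγ0 hγ1 (fun s => hp' s (π s)) fun s => hE s (π s)
  have hγ_ne : 1 - γ ≠ 0 := (sub_pos.2 hγ1).ne'
  calc |Q s a - Q' s a|
      ≤ E + γ * (E / (1 - γ)) := h.abs_q_sub_le_add h' hγ0 (hp' s a) (hE s a) hV
    _ = E / (1 - γ) := by field_simp; ring

end IsPolicyValue

/-- Suprema are expressed through their upper bounds, since they need not exist over an infinite
action set or over `𝕜`. -/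
theorem stmt_6_general {S A ι 𝕜 : Type*} [Fintype S] [Fintype ι] [Field 𝕜] [LinearOrder 𝕜]
    [IsStrictOrderedRing 𝕜] {φ : S → A → ι → 𝕜} {γ : 𝕜} (hγ0 : 0 ≤ γ) (hγ1 : γ < 1)
    {p p' : S → A → S → 𝕜} {r r' : S → A → 𝕜} (hp' : ∀ s a, ∑ s', |p' s a s'| ≤ 1)
    {θ θ' : ι → 𝕜} {μ μ' : S → ι → 𝕜}
    (hM : IsLinearModel φ r p θ μ) (hM' : IsLinearModel φ r' p' θ' μ')
    {π : S → A} {V V' : S → 𝕜} {Q Q' : S → A → 𝕜}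
    (hVQ : IsPolicyValue γ r p π V Q) (hVQ' : IsPolicyValue γ r' p' π V' Q') :
    (∀ D, (∀ s a, |Q s a - Q' s a| ≤ D) → ∀ s, |V s - V' s| ≤ D) ∧
      ∀ E, (∀ s a, |φ s a ⬝ᵥ fun i =>
          θ i - θ' i + γ * ∑ s', (μ s' i - μ' s' i) * V s'| ≤ E) →
        ∀ s a, |Q s a - Q' s a| ≤ 1 / (1 - γ) * E := by
  refine ⟨fun D hD s => ?_, fun E hE s a => ?_⟩
  · rw [hVQ.v_eq, hVQ'.v_eq]
    exact hD s (π s)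
  · rw [one_div_mul_eq_div]
    refine hVQ.abs_q_sub_le_div hVQ' hγ0 hγ1 hp' (fun s a => ?_) s a
    rw [hM.bellmanBackup_sub_eq_dotProduct hM']
    exact hE s a

theorem stmt_6 {S A : Type*} [Fintype S] [Fintype A] [Nonempty S] [Nonempty A]
    {d : ℕ} (φ : S → A → Fin d → ℝ) (γ : ℝ) (hγ : γ ∈ Set.Ioo (0 : ℝ) 1)
    (p p' : S → A → S → ℝ) (r r' : S → A → ℝ)
    (hp0 : ∀ s a s', 0 ≤ p s a s') (hp1 : ∀ s a, ∑ s', p s a s' = 1)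
    (hp0' : ∀ s a s', 0 ≤ p' s a s') (hp1' : ∀ s a, ∑ s', p' s a s' = 1)
    (θ θ' : Fin d → ℝ) (μ μ' : S → Fin d → ℝ)
    (hr : ∀ s a, r s a = φ s a ⬝ᵥ θ) (hP : ∀ s a s', p s a s' = φ s a ⬝ᵥ μ s')
    (hr' : ∀ s a, r' s a = φ s a ⬝ᵥ θ') (hP' : ∀ s a s', p' s a s' = φ s a ⬝ᵥ μ' s')
    (π : S → A) (V V' : S → ℝ) (Q Q' : S → A → ℝ)
    (hQ : ∀ s a, Q s a = r s a + γ * ∑ s', p s a s' * V s')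
    (hV : ∀ s, V s = Q s (π s))
    (hQ' : ∀ s a, Q' s a = r' s a + γ * ∑ s', p' s a s' * V' s')
    (hV' : ∀ s, V' s = Q' s (π s)) :
    (univ.sup' univ_nonempty fun s => |V s - V' s|) ≤
        (univ.sup' univ_nonempty fun sa : S × A => |Q sa.1 sa.2 - Q' sa.1 sa.2|) ∧
      (univ.sup' univ_nonempty fun sa : S × A => |Q sa.1 sa.2 - Q' sa.1 sa.2|) ≤
        (1 / (1 - γ)) *
          (univ.sup' univ_nonempty fun sa : S × A =>
            |φ sa.1 sa.2 ⬝ᵥ fun i =>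
              θ i - θ' i + γ * ∑ s', (μ s' i - μ' s' i) * V s'|) := by
  have hp_abs : ∀ s a, ∑ s', |p' s a s'| ≤ 1 := fun s a => by
    simp only [abs_of_nonneg (hp0' s a _), hp1', le_refl]
  obtain ⟨hVQ, hQE⟩ := stmt_6_general hγ.1.le hγ.2 hp_abs ⟨hr, hP⟩ ⟨hr', hP'⟩ ⟨hQ, hV⟩ ⟨hQ', hV'⟩
  refine ⟨sup'_le _ _ fun s _ => hVQ _ (fun s a => ?_) s,
    sup'_le _ _ fun sa _ => hQE _ (fun s a => ?_) sa.1 sa.2⟩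
  · exact le_sup' (fun sa : S × A => |Q sa.1 sa.2 - Q' sa.1 sa.2|) (mem_univ (s, a))
  · exact le_sup' (fun sa : S × A => |φ sa.1 sa.2 ⬝ᵥ _|) (mem_univ (s, a))
end

section
/- Let M and M' be discounted MDPs on (S, A) with common discount γ ∈ (0,1), let ε > 0, suppose M has a unique optimal policy π*_M (for every s, Q*_M(s,·) has a unique maximizer), and suppose π*_M is not ε-optimal for M'. Then Δ(M) + ε ≤ ‖V*_M − V^{π*_M}_{M'}‖_∞ + ‖Q*_M − Q*_{M'}‖_∞. -/
/-! Consider the loss `V' - Vπ` of a policy `π` in `M'`. At a state `s` where it nearly attains its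
supremum `L > 0`, more precisely where it exceeds both `ε` and `γ L`, some action `a` satisfies
`Vπ s + ε < Q' s a` and `Vπ s + γ L < Q' s a`. The second inequality forces `a ≠ π s`, because
replacing `Vπ` by `V'` in the Bellman equation at `(s, π s)` gains at most `γ L`. The gap `Δ`
therefore applies to `(s, a)`, and
`Δ + ε < (V s - Q s a) + (Q' s a - Vπ s) = (V s - Vπ s) + (Q' s a - Q s a)`. -/

open Matrix Finset

theorem isLUB_range_sup'_univ {ι α : Type*} [Fintype ι] [Nonempty ι] [SemilatticeSup α]
    (f : ι → α) : IsLUB (Set.range f) (univ.sup' univ_nonempty f) :=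
  ⟨Set.forall_mem_range.2 fun i => le_sup' f (mem_univ i),
    fun _ hb => sup'_le _ _ fun i _ => hb (Set.mem_range_self i)⟩

theorem tsum_mul_le_of_forall_le {ι : Type*} {w f : ι → ℝ} {c : ℝ} (hw0 : ∀ i, 0 ≤ w i)
    (hw1 : HasSum w 1) (hwf : Summable fun i => w i * f i) (hf : ∀ i, f i ≤ c) :
    ∑' i, w i * f i ≤ c :=
  hasSum_le (fun i => mul_le_mul_of_nonneg_left (hf i) (hw0 i)) hwf.hasSum
    (by simpa only [one_mul] using hw1.mul_right c)

theorem summable_mul_of_isBounded_range {ι : Type*} {w f : ι → ℝ} (hw : Summable w)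
    (hf : Bornology.IsBounded (Set.range f)) : Summable fun i => w i * f i := by
  obtain ⟨B, hB⟩ := hf.exists_norm_le
  refine Summable.of_norm_bounded (hw.norm.mul_right B) fun i => ?_
  rw [norm_mul]
  exact mul_le_mul_of_nonneg_left (hB _ (Set.mem_range_self i)) (norm_nonneg _)

/-- The action value `r(s, a) + γ ∑ p(s, a, s') V(s')` of a continuation value `V`: the right-hand
side of the Bellman equations. The state space may be infinite, so the expectation is a `tsum`,
which is meaningful for bounded `V`. -/
noncomputable def actionValue {S A : Type*} (γ : ℝ) (p : S → A → S → ℝ) (r : S → A → ℝ)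
    (V : S → ℝ) (s : S) (a : A) : ℝ :=
  r s a + γ * ∑' s', p s a s' * V s'

section DiscountedMDP

variable {S A : Type*} {γ : ℝ} {p : S → A → S → ℝ} {r : S → A → ℝ} {V W : S → ℝ}

theorem actionValue_sub_le {L : ℝ} {s : S} {a : A} (hγ : 0 ≤ γ) (hp0 : ∀ s', 0 ≤ p s a s')
    (hp1 : HasSum (p s a) 1) (hV : Bornology.IsBounded (Set.range V))
    (hW : Bornology.IsBounded (Set.range W)) (hL : ∀ s', V s' - W s' ≤ L) :
    actionValue γ p r V s a - actionValue γ p r W s a ≤ γ * L := by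
  have hpV := summable_mul_of_isBounded_range hp1.summable hV
  have hpW := summable_mul_of_isBounded_range hp1.summable hW
  have hsub := hpV.sub hpW
  simp only [← mul_sub] at hsub
  calc actionValue γ p r V s a - actionValue γ p r W s a
      = γ * ∑' s', p s a s' * (V s' - W s') := by
        simp only [actionValue, mul_sub, hpV.tsum_sub hpW]
        ring
    _ ≤ γ * L := mul_le_mul_of_nonneg_left (tsum_mul_le_of_forall_le hp0 hp1 hsub hL) hγ

theorem exists_ne_policy_and_add_lt_actionValue {ε : ℝ} {π : S → A} (hγ : 0 ≤ γ) (hγ1 : γ < 1)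
    (hε : 0 ≤ ε) (hp0 : ∀ s a s', 0 ≤ p s a s') (hp1 : ∀ s a, HasSum (p s a) 1)
    (hVbdd : Bornology.IsBounded (Set.range V)) (hWbdd : Bornology.IsBounded (Set.range W))
    (hV : ∀ s, IsLUB (Set.range (actionValue γ p r V s)) (V s))
    (hW : ∀ s, W s = actionValue γ p r W s (π s)) (hπ : ¬ ∀ s, V s - ε ≤ W s) :
    ∃ s a, a ≠ π s ∧ W s + ε < actionValue γ p r V s a := by
  push Not at hπ
  obtain ⟨s₁, hs₁⟩ := hπ
  have : Nonempty S := ⟨s₁⟩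
  have hloss : BddAbove (Set.range fun s => V s - W s) :=
    ((hVbdd.sub hWbdd).subset (Set.range_subset_iff.2 fun s =>
      Set.sub_mem_sub (Set.mem_range_self s) (Set.mem_range_self s))).bddAbove
  set L := ⨆ s, (V s - W s)
  have hεL : ε < L := by linarith [le_ciSup hloss s₁]
  obtain ⟨s, hs⟩ : ∃ s, max ε (γ * L) < V s - W s :=
    exists_lt_of_lt_ciSup (max_lt hεL (mul_lt_of_lt_one_left (hε.trans_lt hεL) hγ1))
  obtain ⟨_, ⟨a, rfl⟩, ha⟩ := (lt_isLUB_iff (hV s)).1 (lt_sub_iff_add_lt'.1 hs)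
  refine ⟨s, a, ?_, (add_le_add_right (le_max_left _ _) _).trans_lt ha⟩
  rintro rfl
  have hgain := actionValue_sub_le (r := r) hγ (hp0 s (π s)) (hp1 s (π s)) hVbdd hWbdd
    (le_ciSup hloss)
  linarith [hW s, le_max_right ε (γ * L)]

end DiscountedMDP

theorem stmt_10_general {S A : Type*} {γ ε Δ C D : ℝ} (hγ : γ ∈ Set.Ico (0 : ℝ) 1) (hε : 0 ≤ ε)
    {p' : S → A → S → ℝ} {r' : S → A → ℝ}
    (hp0' : ∀ s a s', 0 ≤ p' s a s') (hp1' : ∀ s a, HasSum (p' s a) 1)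
    {V V' Vπ' : S → ℝ} {Q Q' : S → A → ℝ} {π : S → A}
    (hV'bdd : Bornology.IsBounded (Set.range V'))
    (hQ' : ∀ s a, Q' s a = actionValue γ p' r' V' s a)
    (hV' : ∀ s, IsLUB (Set.range (Q' s)) (V' s))
    (hVπ'bdd : Bornology.IsBounded (Set.range Vπ'))
    (hVπ' : ∀ s, Vπ' s = actionValue γ p' r' Vπ' s (π s))
    (hnotopt : ¬ ∀ s, V' s - ε ≤ Vπ' s)
    (hΔ : ∀ s a, a ≠ π s → Δ ≤ V s - Q s a)
    (hC : ∀ s, V s - Vπ' s ≤ C) (hD : ∀ s a, Q' s a - Q s a ≤ D) :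
    Δ + ε < C + D := by
  obtain rfl : Q' = actionValue γ p' r' V' := funext₂ hQ'
  obtain ⟨s, a, ha, hlt⟩ := exists_ne_policy_and_add_lt_actionValue hγ.1 hγ.2 hε hp0' hp1'
    hV'bdd hVπ'bdd hV' hVπ' hnotopt
  linarith [hΔ s a ha, hC s, hD s a]

theorem stmt_10 {S A : Type*} [Fintype S] [Fintype A] [Nonempty S] [Nonempty A]
    [DecidableEq A]
    (γ : ℝ) (hγ : γ ∈ Set.Ioo (0 : ℝ) 1) (ε : ℝ) (hε : 0 < ε)
    (p p' : S → A → S → ℝ) (r r' : S → A → ℝ)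
    (hp0 : ∀ s a s', 0 ≤ p s a s') (hp1 : ∀ s a, ∑ s', p s a s' = 1)
    (hp0' : ∀ s a s', 0 ≤ p' s a s') (hp1' : ∀ s a, ∑ s', p' s a s' = 1)
    -- optimal value functions of M
    (Vstar : S → ℝ) (Qstar : S → A → ℝ)
    (hQstar : ∀ s a, Qstar s a = r s a + γ * ∑ s', p s a s' * Vstar s')
    (hVstar : ∀ s, Vstar s = univ.sup' univ_nonempty fun a => Qstar s a)
    -- optimal value functions of M'
    (V'star : S → ℝ) (Q'star : S → A → ℝ)
    (hQ'star : ∀ s a, Q'star s a = r' s a + γ * ∑ s', p' s a s' * V'star s')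
    (hV'star : ∀ s, V'star s = univ.sup' univ_nonempty fun a => Q'star s a)
    -- unique optimal policy of M
    (πstar : S → A)
    (hπ : ∀ s a, a ≠ πstar s → Qstar s a < Qstar s (πstar s))
    -- value functions of πstar in M'
    (Vpi' : S → ℝ) (Qpi' : S → A → ℝ)
    (hQpi' : ∀ s a, Qpi' s a = r' s a + γ * ∑ s', p' s a s' * Vpi' s')
    (hVpi' : ∀ s, Vpi' s = Qpi' s (πstar s))
    -- πstar is not ε-optimal for M'
    (hnotopt : ¬ ∀ s, V'star s - ε ≤ Vpi' s)
    -- the suboptimality gap of M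
    (T : Finset (S × A)) (hTdef : T = univ.filter fun sa : S × A => sa.2 ≠ πstar sa.1)
    (hT : T.Nonempty) :
    T.inf' hT (fun sa => Vstar sa.1 - Qstar sa.1 sa.2) + ε ≤
      (univ.sup' univ_nonempty fun s => |Vstar s - Vpi' s|) +
        (univ.sup' univ_nonempty fun sa : S × A =>
          |Qstar sa.1 sa.2 - Q'star sa.1 sa.2|) := by
  have hgap (s a) (ha : a ≠ πstar s) :
      T.inf' hT (fun sa => Vstar sa.1 - Qstar sa.1 sa.2) ≤ Vstar s - Qstar s a :=
    inf'_le (fun sa : S × A => Vstar sa.1 - Qstar sa.1 sa.2) (b := (s, a))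
      (by simpa only [hTdef, mem_filter_univ] using ha)
  have hV (s) := (le_abs_self _).trans (le_sup' (fun s => |Vstar s - Vpi' s|) (mem_univ s))
  have hQ (s a) := (neg_sub _ _).ge.trans <| (neg_le_abs _).trans <|
    le_sup' (fun sa : S × A => |Qstar sa.1 sa.2 - Q'star sa.1 sa.2|) (mem_univ (s, a))
  exact (stmt_10_general (Set.Ioo_subset_Ico_self hγ) hε.le hp0'
    (fun s a => hp1' s a ▸ hasSum_fintype _) (Set.finite_range _).isBounded
    (by simpa only [actionValue, tsum_fintype] using hQ'star)
    (fun s => hV'star s ▸ isLUB_range_sup'_univ _) (Set.finite_range _).isBounded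
    (by simpa only [actionValue, tsum_fintype, hQpi'] using hVpi') hnotopt hgap hV hQ).le
end

section
/- Let M and M' be episodic MDPs on (S, A) with common horizon H, let ε > 0, suppose M has a unique optimal policy π*_M = (π*_{M,h})_h (for every h and s, Q*_{M,h}(s,·) has a unique maximizer), and suppose π*_M is not ε-optimal for M'. Then there exists h ∈ {1,…,H} such that Δ(M) + ε ≤ ‖V*_{M,h} − V^{π*_M}_{M',h}‖_∞ + ‖Q*_{M,h} − Q*_{M',h}‖_∞. -/
/-!
The optimal value function of `M'` is the value function of a greedy policy `σ`. At a step where `σ`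
and `π` choose the same action, the loss of `π` relative to `σ` is an average of the losses at the
next step, so a loss exceeding `ε` at step `1` forces a loss exceeding `ε` at some `(h, s)` where
`a := σ_h(s)` differs from `π_h(s)`. There `Δ(M) ≤ V*_{M,h}(s) - Q*_{M,h}(s, a)` and
`V*_{M',h}(s) = Q*_{M',h}(s, a)`, so `Δ(M)` plus the loss at `(h, s)` is at most
`(V*_{M,h} - V^π_{M',h})(s) + (Q*_{M',h} - Q*_{M,h})(s, a)`.
-/

open Matrix Finset

theorem sum_mul_le_sum_mul_add_of_sum_eq_one {ι R : Type*} [Semiring R] [PartialOrder R]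
    [IsOrderedRing R] {t : Finset ι} {w f g : ι → R} {c : R} (hw₀ : ∀ i ∈ t, 0 ≤ w i)
    (hw₁ : ∑ i ∈ t, w i = 1) (hfg : ∀ i ∈ t, f i ≤ g i + c) :
    ∑ i ∈ t, w i * f i ≤ ∑ i ∈ t, w i * g i + c :=
  calc
    ∑ i ∈ t, w i * f i ≤ ∑ i ∈ t, w i * (g i + c) :=
      sum_le_sum fun i hi => mul_le_mul_of_nonneg_left (hfg i hi) (hw₀ i hi)
    _ = ∑ i ∈ t, w i * g i + c := by
      simp only [mul_add, sum_add_distrib, ← sum_mul, hw₁, one_mul]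

theorem isGreatest_range_sup' {ι α : Type*} [Fintype ι] [Nonempty ι] [LinearOrder α] (f : ι → α) :
    IsGreatest (Set.range f) (univ.sup' univ_nonempty f) := by
  obtain ⟨i, -, hi⟩ := exists_mem_eq_sup' univ_nonempty f
  exact ⟨⟨i, hi.symm⟩, Set.forall_mem_range.2 fun j => le_sup' f (mem_univ j)⟩

/-- An episodic Markov decision process with steps `1, …, H`. The transitions and expected rewards
are indexed by `ℕ`, and only their values at steps in `Icc 1 H` are meaningful. -/
structure EpisodicMDP (S A : Type*) [Fintype S] (H : ℕ) where
  trans : ℕ → S → A → S → ℝ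
  reward : ℕ → S → A → ℝ
  trans_nonneg : ∀ h ∈ Icc 1 H, ∀ s a s', 0 ≤ trans h s a s'
  sum_trans : ∀ h ∈ Icc 1 H, ∀ s a, ∑ s', trans h s a s' = 1

namespace EpisodicMDP

variable {S A : Type*} [Fintype S] {H : ℕ} {M : EpisodicMDP S A H} {σ π : ℕ → S → A}
  {V W : ℕ → S → ℝ} {Q R : ℕ → S → A → ℝ} {ε : ℝ} {h : ℕ}

/-- The Bellman backup: the expected return of an action at step `h` when the return from step
`h + 1` on is given by `v`. -/
def backup (M : EpisodicMDP S A H) (h : ℕ) (v : S → ℝ) (s : S) (a : A) : ℝ :=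
  M.reward h s a + ∑ s', M.trans h s a s' * v s'

/-- `V` and `Q` are the state and action value functions of the policy `π`. -/
structure IsPolicyValue (M : EpisodicMDP S A H) (π : ℕ → S → A) (V : ℕ → S → ℝ)
    (Q : ℕ → S → A → ℝ) : Prop where
  terminal : ∀ s, V (H + 1) s = 0
  bellman : ∀ h ∈ Icc 1 H, ∀ s a, Q h s a = M.backup h (V (h + 1)) s a
  value_eq : ∀ h ∈ Icc 1 H, ∀ s, V h s = Q h s (π h s)

/-- `V` and `Q` are the optimal state and action value functions. The maximum over actions is
required to be attained, so that `A` may be infinite. -/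
structure IsOptimalValue (M : EpisodicMDP S A H) (V : ℕ → S → ℝ) (Q : ℕ → S → A → ℝ) : Prop where
  terminal : ∀ s, V (H + 1) s = 0
  bellman : ∀ h ∈ Icc 1 H, ∀ s a, Q h s a = M.backup h (V (h + 1)) s a
  isGreatest : ∀ h ∈ Icc 1 H, ∀ s, IsGreatest (Set.range (Q h s)) (V h s)

theorem backup_le_backup_add (hh : h ∈ Icc 1 H) {v w : S → ℝ} (hvw : ∀ s, v s ≤ w s + ε) (s : S)
    (a : A) : M.backup h v s a ≤ M.backup h w s a + ε := by
  have havg : ∑ s', M.trans h s a s' * v s' ≤ ∑ s', M.trans h s a s' * w s' + ε :=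
    sum_mul_le_sum_mul_add_of_sum_eq_one (fun s' _ => M.trans_nonneg h hh s a s')
      (M.sum_trans h hh s a) fun s' _ => hvw s'
  simpa only [backup, add_assoc] using add_le_add_right havg (M.reward h s a)

theorem IsOptimalValue.exists_isPolicyValue [Nonempty A] (hV : M.IsOptimalValue V Q) :
    ∃ σ, M.IsPolicyValue σ V Q := by
  have hattained : ∀ h s, ∃ a, h ∈ Icc 1 H → Q h s a = V h s := fun h s => by
    by_cases hh : h ∈ Icc 1 H
    · obtain ⟨a, ha⟩ := (hV.isGreatest h hh s).1
      exact ⟨a, fun _ => ha⟩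
    · exact ⟨Classical.arbitrary A, fun hh' => absurd hh' hh⟩
  choose σ hσ using hattained
  exact ⟨σ, hV.terminal, hV.bellman, fun h hh s => (hσ h s hh).symm⟩

theorem IsPolicyValue.le_add_of_eq (hσ : M.IsPolicyValue σ V Q) (hπ : M.IsPolicyValue π W R)
    (hh : h ∈ Icc 1 H) (hnext : ∀ s, V (h + 1) s ≤ W (h + 1) s + ε) {s : S}
    (hs : σ h s = π h s) : V h s ≤ W h s + ε := by
  rw [hσ.value_eq h hh, hπ.value_eq h hh, hσ.bellman h hh, hπ.bellman h hh, hs]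
  exact backup_le_backup_add hh hnext s (π h s)

theorem IsPolicyValue.le_add_of_forall_ne (hσ : M.IsPolicyValue σ V Q)
    (hπ : M.IsPolicyValue π W R) (hε : 0 ≤ ε)
    (hne : ∀ h ∈ Icc 1 H, ∀ s, σ h s ≠ π h s → V h s ≤ W h s + ε) (hh : h ∈ Icc 1 (H + 1)) :
    ∀ s, V h s ≤ W h s + ε := by
  obtain ⟨h_pos, h_le⟩ := mem_Icc.1 hh
  induction h_le using Nat.decreasingInduction with
  | self => simpa only [hσ.terminal, hπ.terminal, zero_add] using fun _ => hε
  | of_succ k hk hnext =>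
    have hk_mem : k ∈ Icc 1 H := mem_Icc.2 ⟨h_pos, Nat.lt_succ_iff.1 hk⟩
    have hnext_le := hnext (mem_Icc.2 ⟨Nat.le_add_left 1 k, hk⟩) (Nat.le_add_left 1 k)
    intro s
    by_cases hs : σ k s = π k s
    · exact hσ.le_add_of_eq hπ hk_mem hnext_le hs
    · exact hne k hk_mem s hs

end EpisodicMDP

theorem stmt_11_general {S A : Type*} [Fintype S] [Nonempty A] {H : ℕ} {M : EpisodicMDP S A H}
    {V' Vpi' : ℕ → S → ℝ} {Q' Qpi' : ℕ → S → A → ℝ} {π : ℕ → S → A} {ε Δ : ℝ}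
    (hV' : M.IsOptimalValue V' Q') (hVpi' : M.IsPolicyValue π Vpi' Qpi') (hε : 0 ≤ ε)
    (hnotopt : ¬ ∀ s, V' 1 s - ε ≤ Vpi' 1 s) (V : ℕ → S → ℝ) (Q : ℕ → S → A → ℝ)
    (hΔ : ∀ h ∈ Icc 1 H, ∀ s a, a ≠ π h s → Δ ≤ V h s - Q h s a) :
    ∃ h ∈ Icc 1 H, ∃ s a, Δ + ε < |V h s - Vpi' h s| + |Q h s a - Q' h s a| := by
  by_contra! hsmall
  obtain ⟨σ, hσ⟩ := hV'.exists_isPolicyValue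
  have hloss : ∀ h ∈ Icc 1 H, ∀ s, σ h s ≠ π h s → V' h s ≤ Vpi' h s + ε := by
    intro h hh s hs
    have hgap := hΔ h hh s (σ h s) hs
    have hbound := hsmall h hh s (σ h s)
    rw [hσ.value_eq h hh s]
    linarith [le_abs_self (V h s - Vpi' h s), neg_abs_le (Q h s (σ h s) - Q' h s (σ h s))]
  exact hnotopt fun s => sub_le_iff_le_add.2 <|
    hσ.le_add_of_forall_ne hVpi' hε hloss (left_mem_Icc.2 (Nat.le_add_left 1 H)) s

theorem stmt_11 {S A : Type*} [Fintype S] [Fintype A] [Nonempty S] [Nonempty A]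
    [DecidableEq A]
    (H : ℕ) (hH : 1 ≤ H) (ε : ℝ) (hε : 0 < ε)
    (p p' : ℕ → S → A → S → ℝ) (r r' : ℕ → S → A → ℝ)
    (hp0 : ∀ h ∈ Finset.Icc 1 H, ∀ s a s', 0 ≤ p h s a s')
    (hp1 : ∀ h ∈ Finset.Icc 1 H, ∀ s a, ∑ s', p h s a s' = 1)
    (hp0' : ∀ h ∈ Finset.Icc 1 H, ∀ s a s', 0 ≤ p' h s a s')
    (hp1' : ∀ h ∈ Finset.Icc 1 H, ∀ s a, ∑ s', p' h s a s' = 1)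
    -- optimal value functions of M
    (Vstar : ℕ → S → ℝ) (Qstar : ℕ → S → A → ℝ)
    (hVstarTop : ∀ s, Vstar (H + 1) s = 0)
    (hQstar : ∀ h ∈ Finset.Icc 1 H, ∀ s a,
      Qstar h s a = r h s a + ∑ s', p h s a s' * Vstar (h + 1) s')
    (hVstar : ∀ h ∈ Finset.Icc 1 H, ∀ s,
      Vstar h s = univ.sup' univ_nonempty fun a => Qstar h s a)
    -- optimal value functions of M'
    (V'star : ℕ → S → ℝ) (Q'star : ℕ → S → A → ℝ)
    (hV'starTop : ∀ s, V'star (H + 1) s = 0)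
    (hQ'star : ∀ h ∈ Finset.Icc 1 H, ∀ s a,
      Q'star h s a = r' h s a + ∑ s', p' h s a s' * V'star (h + 1) s')
    (hV'star : ∀ h ∈ Finset.Icc 1 H, ∀ s,
      V'star h s = univ.sup' univ_nonempty fun a => Q'star h s a)
    -- unique optimal policy of M
    (πstar : ℕ → S → A)
    (hπ : ∀ h ∈ Finset.Icc 1 H, ∀ s a, a ≠ πstar h s →
      Qstar h s a < Qstar h s (πstar h s))
    -- value functions of πstar in M'
    (Vpi' : ℕ → S → ℝ) (Qpi' : ℕ → S → A → ℝ)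
    (hVpi'Top : ∀ s, Vpi' (H + 1) s = 0)
    (hQpi' : ∀ h ∈ Finset.Icc 1 H, ∀ s a,
      Qpi' h s a = r' h s a + ∑ s', p' h s a s' * Vpi' (h + 1) s')
    (hVpi' : ∀ h ∈ Finset.Icc 1 H, ∀ s, Vpi' h s = Qpi' h s (πstar h s))
    -- πstar is not ε-optimal for M'
    (hnotopt : ¬ ∀ s, V'star 1 s - ε ≤ Vpi' 1 s)
    -- the gap of M
    (T : Finset (ℕ × S × A))
    (hTdef : T = (Finset.Icc 1 H ×ˢ (univ : Finset (S × A))).filter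
      fun x : ℕ × S × A => x.2.2 ≠ πstar x.1 x.2.1)
    (hT : T.Nonempty) :
    ∃ h ∈ Finset.Icc 1 H,
      T.inf' hT (fun x => Vstar x.1 x.2.1 - Qstar x.1 x.2.1 x.2.2) + ε ≤
        (univ.sup' univ_nonempty fun s => |Vstar h s - Vpi' h s|) +
          (univ.sup' univ_nonempty fun sa : S × A =>
            |Qstar h sa.1 sa.2 - Q'star h sa.1 sa.2|) := by
  obtain ⟨h, hh, s, a, hlt⟩ := stmt_11_general (M := ⟨p', r', hp0', hp1'⟩)
    (Δ := T.inf' hT fun x => Vstar x.1 x.2.1 - Qstar x.1 x.2.1 x.2.2) ⟨hV'starTop, hQ'star,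
      fun h hh s => hV'star h hh s ▸ isGreatest_range_sup' (Q'star h s)⟩
    ⟨hVpi'Top, hQpi', hVpi'⟩ hε.le hnotopt Vstar Qstar fun h hh s a ha =>
      T.inf'_le (fun x => Vstar x.1 x.2.1 - Qstar x.1 x.2.1 x.2.2) (b := (h, s, a)) <|
        hTdef ▸ mem_filter.2 ⟨mem_product.2 ⟨hh, mem_univ _⟩, ha⟩
  exact ⟨h, hh, hlt.le.trans <| add_le_add
    (le_sup' (fun s => |Vstar h s - Vpi' h s|) (mem_univ s))
    (le_sup' (fun sa : S × A => |Qstar h sa.1 sa.2 - Q'star h sa.1 sa.2|) (mem_univ (s, a)))⟩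
end

section
/- Let M and M̂ be two linear discounted MDPs on (S, A) with common feature map φ : S×A → ℝ^d and common discount γ ∈ (0,1), with parameters (θ_M, μ_M) and (θ̂, μ̂) respectively, and suppose each of M and M̂ has a unique optimal policy (for every s, both Q*_M(s,·) and Q*_{M̂}(s,·) have unique maximizers). Then |Δ(M̂) − Δ(M)| ≤ (2/(1−γ))·max_{(s,a)∈S×A} |φ(s,a)ᵀ(θ̂ − θ_M + γ·Σ_{s'∈S} (μ̂(s') − μ_M(s'))·V*_{M̂}(s'))|. -/
/-!
The optimal action-value function of `M` is the fixed point of the Bellman operator `T` of `M`,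
a `γ`-contraction in the sup norm. Hence any `Qhat` satisfies
`dist Qhat Qstar ≤ dist Qhat (T Qhat) / (1 - γ)`, and when `Qhat` is itself optimal for a linear
model over the same features, linearity turns its residual `Qhat - T Qhat` into the inner product
with `φ` on the right-hand side of the theorem.

The gap at a state is the difference of the two largest values of `Q s`, each of which is
1-Lipschitz in `Q`, so the minimal gap moves by at most `2 * dist Qhat Qstar`.
-/

open Matrix Finset

open scoped NNReal

section SupNorm

variable {ι : Type*} [Fintype ι]

lemma lipschitzWith_sup' {s : Finset ι} (hs : s.Nonempty) :
    LipschitzWith 1 fun f : ι → ℝ => s.sup' hs f := by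
  refine .of_le_add fun f g => sup'_le _ _ fun i hi => ?_
  calc f i ≤ g i + dist f g :=
        sub_le_iff_le_add'.mp <| (le_abs_self _).trans (dist_le_pi_dist f g i)
    _ ≤ s.sup' hs g + dist f g := by gcongr; exact le_sup' g hi

lemma abs_dotProduct_le_sum_abs_mul_norm (w f : ι → ℝ) :
    |w ⬝ᵥ f| ≤ (∑ i, |w i|) * ‖f‖ := by
  calc |w ⬝ᵥ f| ≤ ∑ i, |w i * f i| := abs_sum_le_sum_abs _ _
    _ ≤ ∑ i, |w i| * ‖f‖ := by
      gcongr with i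
      rw [abs_mul]
      gcongr
      exact norm_le_pi_norm f i
    _ = (∑ i, |w i|) * ‖f‖ := (sum_mul ..).symm

end SupNorm

section Bellman

variable {S A : Type*} [Fintype A] [Nonempty A]

/-- The state-value function `V s = max_a Q s a` of an action-value function `Q`. -/
def greedyValue (Q : S → A → ℝ) (s : S) : ℝ :=
  univ.sup' univ_nonempty (Q s)

variable [Fintype S]

/-- The Bellman optimality operator with rewards `r` and transitions `p`, acting on action-value
functions. The optimal action-value function of the MDP is its fixed point. -/
def bellmanOperator (γ : ℝ) (r : S → A → ℝ) (p : S → A → S → ℝ) (Q : S → A → ℝ) :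
    S → A → ℝ :=
  fun s a => r s a + γ * p s a ⬝ᵥ greedyValue Q

lemma lipschitzWith_greedyValue :
    LipschitzWith 1 (greedyValue : (S → A → ℝ) → S → ℝ) :=
  .mk_one fun Q Q' => (dist_pi_le_iff dist_nonneg).mpr fun s =>
    ((lipschitzWith_sup' univ_nonempty).dist_le_mul (Q s) (Q' s)).trans <| by
      simpa using dist_le_pi_dist Q Q' s

lemma contractingWith_bellmanOperator {γ : ℝ≥0} (hγ : γ < 1) (r : S → A → ℝ)
    {p : S → A → S → ℝ} (hp : ∀ s a, ∑ s', |p s a s'| ≤ 1) :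
    ContractingWith γ (bellmanOperator γ r p) := by
  refine ⟨hγ, .of_dist_le_mul fun Q Q' => ?_⟩
  have hnonneg : 0 ≤ γ * dist Q Q' := by positivity
  refine (dist_pi_le_iff hnonneg).mpr fun s => (dist_pi_le_iff hnonneg).mpr fun a => ?_
  have hV : ‖greedyValue Q - greedyValue Q'‖ ≤ dist Q Q' := by
    simpa [dist_eq_norm] using lipschitzWith_greedyValue.dist_le_mul Q Q'
  calc dist (bellmanOperator γ r p Q s a) (bellmanOperator γ r p Q' s a)
      = γ * |p s a ⬝ᵥ (greedyValue Q - greedyValue Q')| := by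
        simp only [bellmanOperator, dist_add_left, Real.dist_eq, ← mul_sub, ← dotProduct_sub,
          abs_mul, NNReal.abs_eq]
    _ ≤ γ * ((∑ s', |p s a s'|) * ‖greedyValue Q - greedyValue Q'‖) := by
        gcongr; exact abs_dotProduct_le_sum_abs_mul_norm _ _
    _ ≤ γ * (1 * dist Q Q') := by gcongr; exact hp s a
    _ = γ * dist Q Q' := by rw [one_mul]

lemma sub_bellmanOperator_of_linear {ι : Type*} [Fintype ι] {φ : S → A → ι → ℝ} {γ : ℝ}
    {r rhat : S → A → ℝ} {p phat : S → A → S → ℝ} {θ θhat : ι → ℝ} {μ μhat : S → ι → ℝ}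
    (hr : ∀ s a, r s a = φ s a ⬝ᵥ θ) (hP : ∀ s a s', p s a s' = φ s a ⬝ᵥ μ s')
    (hrhat : ∀ s a, rhat s a = φ s a ⬝ᵥ θhat)
    (hPhat : ∀ s a s', phat s a s' = φ s a ⬝ᵥ μhat s') (Q : S → A → ℝ) (s : S) (a : A) :
    bellmanOperator γ rhat phat Q s a - bellmanOperator γ r p Q s a =
      φ s a ⬝ᵥ fun i =>
        θhat i - θ i + γ * ∑ s', (μhat s' i - μ s' i) * greedyValue Q s' := by
  have hvec : (fun i => θhat i - θ i + γ * ∑ s', (μhat s' i - μ s' i) * greedyValue Q s') =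
      θhat - θ + γ • ∑ s', greedyValue Q s' • (μhat s' - μ s') := by
    ext i
    simp [mul_comm]
  have htransition : φ s a ⬝ᵥ ∑ s', greedyValue Q s' • (μhat s' - μ s') =
      phat s a ⬝ᵥ greedyValue Q - p s a ⬝ᵥ greedyValue Q := by
    rw [dotProduct_sum, ← sub_dotProduct]
    refine sum_congr rfl fun s' _ => ?_
    rw [dotProduct_smul, dotProduct_sub, Pi.sub_apply, hPhat, hP, smul_eq_mul, mul_comm]
  rw [hvec, dotProduct_add, dotProduct_sub, dotProduct_smul, htransition, ← hr, ← hrhat]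
  simp only [bellmanOperator, smul_eq_mul]
  ring

end Bellman

section Gap

variable {S A : Type*}

/-- The policy `π` selects a maximizer of `Q s` at every state `s`. -/
def IsGreedy (Q : S → A → ℝ) (π : S → A) : Prop :=
  ∀ s a, Q s a ≤ Q s (π s)

lemma IsGreedy.of_lt {Q : S → A → ℝ} {π : S → A}
    (h : ∀ s a, a ≠ π s → Q s a < Q s (π s)) : IsGreedy Q π := fun s a => by
  rcases eq_or_ne a (π s) with rfl | ha
  · rfl
  · exact (h s a ha).le

variable [Fintype A]

lemma IsGreedy.greedyValue_eq [Nonempty A] {Q : S → A → ℝ} {π : S → A} (hπ : IsGreedy Q π)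
    (s : S) : greedyValue Q s = Q s (π s) :=
  le_antisymm (sup'_le _ _ fun a _ => hπ s a) (le_sup' (Q s) (mem_univ (π s)))

lemma exists_ne_sub_le_add_two_mul_dist {q q' : A → ℝ} {a a' c : A} (ha : ∀ b, q b ≤ q a)
    (hc : c ≠ a) : ∃ c' ≠ a', q' a' - q' c' ≤ q a - q c + 2 * dist q' q := by
  have hdist (b : A) : |q' b - q b| ≤ dist q' q := dist_le_pi_dist q' q b
  have hupper := (abs_le.mp (hdist a')).2
  by_cases hca' : c = a'
  · -- `c` cannot serve as the competitor of `a'`, but the former maximizer `a` can.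
    refine ⟨a, hca' ▸ hc.symm, ?_⟩
    subst hca'
    linarith [(abs_le.mp (hdist a)).1, ha c]
  · exact ⟨c, hca', by linarith [(abs_le.mp (hdist c)).1, ha a']⟩

variable [Fintype S] [DecidableEq A]

/-- The state-action pairs `(s, a)` with `a ≠ π s`, the domain of the minimum defining the
suboptimality gap. -/
def offPolicyPairs (π : S → A) : Finset (S × A) :=
  univ.filter fun sa => sa.2 ≠ π sa.1

variable [Nonempty A]

/-- The minimum of `V s - Q s a` over all pairs with `a ≠ π s`, where `V` is the greedy value of
`Q`. For `π` greedy with respect to the optimal action-value function `Q` of an MDP `M` this is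
the suboptimality gap `Δ(M)`. -/
def suboptimalityGap (Q : S → A → ℝ) (π : S → A) (h : (offPolicyPairs π).Nonempty) : ℝ :=
  (offPolicyPairs π).inf' h fun sa => greedyValue Q sa.1 - Q sa.1 sa.2

lemma suboptimalityGap_le_add_two_mul_dist {Q Q' : S → A → ℝ} {π π' : S → A}
    (hπ : IsGreedy Q π) (hπ' : IsGreedy Q' π') (h : (offPolicyPairs π).Nonempty)
    (h' : (offPolicyPairs π').Nonempty) :
    suboptimalityGap Q' π' h' ≤ suboptimalityGap Q π h + 2 * dist Q' Q := by
  obtain ⟨⟨s, c⟩, hmem, hgap⟩ :=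
    exists_mem_eq_inf' h fun sa => greedyValue Q sa.1 - Q sa.1 sa.2
  obtain ⟨c', hc', hle⟩ := exists_ne_sub_le_add_two_mul_dist (q' := Q' s) (a' := π' s) (hπ s)
    (by simpa [offPolicyPairs] using hmem)
  have hmem' : (s, c') ∈ offPolicyPairs π' := by simpa [offPolicyPairs] using hc'
  calc suboptimalityGap Q' π' h' ≤ greedyValue Q' s - Q' s c' :=
        inf'_le (fun sa : S × A => greedyValue Q' sa.1 - Q' sa.1 sa.2) hmem'
    _ ≤ greedyValue Q s - Q s c + 2 * dist (Q' s) (Q s) := by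
        rwa [hπ.greedyValue_eq, hπ'.greedyValue_eq]
    _ ≤ suboptimalityGap Q π h + 2 * dist Q' Q := by
        rw [suboptimalityGap, hgap]
        gcongr
        exact dist_le_pi_dist Q' Q s

lemma abs_suboptimalityGap_sub_le_two_mul_dist {Q Q' : S → A → ℝ} {π π' : S → A}
    (hπ : IsGreedy Q π) (hπ' : IsGreedy Q' π') (h : (offPolicyPairs π).Nonempty)
    (h' : (offPolicyPairs π').Nonempty) :
    |suboptimalityGap Q' π' h' - suboptimalityGap Q π h| ≤ 2 * dist Q' Q := by
  have hle := suboptimalityGap_le_add_two_mul_dist hπ hπ' h h'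
  have hge := suboptimalityGap_le_add_two_mul_dist hπ' hπ h' h
  rw [dist_comm] at hge
  exact abs_sub_le_iff.mpr ⟨by linarith, by linarith⟩

lemma abs_suboptimalityGap_sub_le_of_isFixedPt {γ : ℝ≥0} (hγ : γ < 1) {r : S → A → ℝ}
    {p : S → A → S → ℝ} (hp : ∀ s a, ∑ s', |p s a s'| ≤ 1) {Q Q' : S → A → ℝ}
    (hQ : Function.IsFixedPt (bellmanOperator γ r p) Q) {π π' : S → A} (hπ : IsGreedy Q π)
    (hπ' : IsGreedy Q' π') (h : (offPolicyPairs π).Nonempty)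
    (h' : (offPolicyPairs π').Nonempty) :
    |suboptimalityGap Q' π' h' - suboptimalityGap Q π h| ≤
      2 / (1 - γ) * dist Q' (bellmanOperator γ r p Q') := by
  calc |suboptimalityGap Q' π' h' - suboptimalityGap Q π h| ≤ 2 * dist Q' Q :=
        abs_suboptimalityGap_sub_le_two_mul_dist hπ hπ' h h'
    _ ≤ 2 * (dist Q' (bellmanOperator γ r p Q') / (1 - γ)) := by
        gcongr; exact (contractingWith_bellmanOperator hγ r hp).dist_le_of_fixedPoint Q' hQ
    _ = 2 / (1 - γ) * dist Q' (bellmanOperator γ r p Q') := by ring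

end Gap

theorem stmt_12_general {S A ι : Type*} [Fintype S] [Fintype A] [Fintype ι] [Nonempty S]
    [Nonempty A] [DecidableEq A] (φ : S → A → ι → ℝ) {γ : ℝ} (hγ : γ ∈ Set.Ico (0 : ℝ) 1)
    {p phat : S → A → S → ℝ} {r rhat : S → A → ℝ} (hp : ∀ s a, ∑ s', |p s a s'| ≤ 1)
    {θ θhat : ι → ℝ} {μ μhat : S → ι → ℝ}
    (hr : ∀ s a, r s a = φ s a ⬝ᵥ θ) (hP : ∀ s a s', p s a s' = φ s a ⬝ᵥ μ s')
    (hrhat : ∀ s a, rhat s a = φ s a ⬝ᵥ θhat)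
    (hPhat : ∀ s a s', phat s a s' = φ s a ⬝ᵥ μhat s')
    {Qstar Qhat : S → A → ℝ} (hQstar : Function.IsFixedPt (bellmanOperator γ r p) Qstar)
    (hQhat : Function.IsFixedPt (bellmanOperator γ rhat phat) Qhat)
    {πstar πhat : S → A} (hπ : IsGreedy Qstar πstar) (hπhat : IsGreedy Qhat πhat)
    (hT : (offPolicyPairs πstar).Nonempty) (hThat : (offPolicyPairs πhat).Nonempty) :
    |suboptimalityGap Qhat πhat hThat - suboptimalityGap Qstar πstar hT| ≤
      2 / (1 - γ) * univ.sup' univ_nonempty fun sa : S × A =>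
        |φ sa.1 sa.2 ⬝ᵥ fun i =>
          θhat i - θ i + γ * ∑ s', (μhat s' i - μ s' i) * greedyValue Qhat s'| := by
  obtain ⟨hγ0, hγ1⟩ := hγ
  lift γ to ℝ≥0 using hγ0
  refine (abs_suboptimalityGap_sub_le_of_isFixedPt hγ1 hp hQstar hπ hπhat hT hThat).trans ?_
  have : 0 ≤ 1 - (γ : ℝ) := sub_nonneg.mpr hγ1.le
  gcongr
  refine dist_pi_le_iff'.mpr fun s => dist_pi_le_iff'.mpr fun a => ?_
  have hresidual := sub_bellmanOperator_of_linear (γ := γ) hr hP hrhat hPhat Qhat s a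
  rw [hQhat.eq] at hresidual
  rw [Real.dist_eq, hresidual]
  exact le_sup' (fun sa : S × A => |φ sa.1 sa.2 ⬝ᵥ fun i =>
    θhat i - θ i + γ * ∑ s', (μhat s' i - μ s' i) * greedyValue Qhat s'|) (mem_univ (s, a))

theorem stmt_12 {S A : Type*} [Fintype S] [Fintype A] [Nonempty S] [Nonempty A]
    [DecidableEq A]
    {d : ℕ} (φ : S → A → Fin d → ℝ) (γ : ℝ) (hγ : γ ∈ Set.Ioo (0 : ℝ) 1)
    (p phat : S → A → S → ℝ) (r rhat : S → A → ℝ)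
    (hp0 : ∀ s a s', 0 ≤ p s a s') (hp1 : ∀ s a, ∑ s', p s a s' = 1)
    (hp0hat : ∀ s a s', 0 ≤ phat s a s') (hp1hat : ∀ s a, ∑ s', phat s a s' = 1)
    (θ θhat : Fin d → ℝ) (μ μhat : S → Fin d → ℝ)
    (hr : ∀ s a, r s a = φ s a ⬝ᵥ θ) (hP : ∀ s a s', p s a s' = φ s a ⬝ᵥ μ s')
    (hrhat : ∀ s a, rhat s a = φ s a ⬝ᵥ θhat)
    (hPhat : ∀ s a s', phat s a s' = φ s a ⬝ᵥ μhat s')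
    -- optimal value functions of M
    (Vstar : S → ℝ) (Qstar : S → A → ℝ)
    (hQstar : ∀ s a, Qstar s a = r s a + γ * ∑ s', p s a s' * Vstar s')
    (hVstar : ∀ s, Vstar s = univ.sup' univ_nonempty fun a => Qstar s a)
    -- optimal value functions of M̂
    (Vhat : S → ℝ) (Qhat : S → A → ℝ)
    (hQhat : ∀ s a, Qhat s a = rhat s a + γ * ∑ s', phat s a s' * Vhat s')
    (hVhat : ∀ s, Vhat s = univ.sup' univ_nonempty fun a => Qhat s a)
    -- unique optimal policies
    (πstar πhat : S → A)
    (hπ : ∀ s a, a ≠ πstar s → Qstar s a < Qstar s (πstar s))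
    (hπhat : ∀ s a, a ≠ πhat s → Qhat s a < Qhat s (πhat s))
    -- the suboptimality gaps
    (T That : Finset (S × A))
    (hTdef : T = univ.filter fun sa : S × A => sa.2 ≠ πstar sa.1)
    (hThatdef : That = univ.filter fun sa : S × A => sa.2 ≠ πhat sa.1)
    (hT : T.Nonempty) (hThat : That.Nonempty) :
    |That.inf' hThat (fun sa => Vhat sa.1 - Qhat sa.1 sa.2) -
        T.inf' hT (fun sa => Vstar sa.1 - Qstar sa.1 sa.2)| ≤
      (2 / (1 - γ)) *
        (univ.sup' univ_nonempty fun sa : S × A =>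
          |φ sa.1 sa.2 ⬝ᵥ fun i =>
            θhat i - θ i + γ * ∑ s', (μhat s' i - μ s' i) * Vhat s'|) := by
  obtain rfl : Vstar = greedyValue Qstar := funext hVstar
  obtain rfl : Vhat = greedyValue Qhat := funext hVhat
  subst hTdef hThatdef
  have hp (s : S) (a : A) : ∑ s', |p s a s'| ≤ 1 := by
    simp only [abs_of_nonneg (hp0 s a _), hp1, le_refl]
  exact stmt_12_general φ (Set.Ioo_subset_Ico_self hγ) hp hr hP hrhat hPhat
    (funext₂ hQstar).symm (funext₂ hQhat).symm (.of_lt hπ) (.of_lt hπhat)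
    hT hThat
end

section
/- Let M and M' be two linear discounted MDPs on (S, A) with common feature map φ : S×A → ℝ^d and common discount γ ∈ (0,1), with parameters (θ_M, μ_M) and (θ_{M'}, μ_{M'}), and with reward distributions q_M(s,a) and q_{M'}(s,a) that are probability measures supported on [0,1] with means r_M(s,a) = φ(s,a)ᵀθ_M and r_{M'}(s,a) = φ(s,a)ᵀθ_{M'} respectively. Then for every probability vector ω on S×A: Σ_{(s,a)∈S×A} ω(s,a)·KL_{M|M'}(s,a) ≥ (6(1−γ)²/5)·‖θ_M − θ_{M'} + γ·Σ_{s'∈S} (μ_M(s') − μ_{M'}(s'))·V*_M(s')‖²_{Λ(ω)}. -/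
open Matrix Finset MeasureTheory
open scoped Classical

/-- Kullback–Leibler divergence between probability vectors on a finite set. -/
noncomputable def klFin {S : Type*} [Fintype S] (p q : S → ℝ) : EReal :=
  if ∀ s, q s = 0 → p s = 0
  then ((∑ s, p s * Real.log (p s / q s) : ℝ) : EReal) else ⊤

/-!
By the Gibbs variational principle and Hoeffding's lemma, a random variable with values in `[a, b]`
whose means under `α` and `β` differ by `δ` forces `KL(α‖β) ≥ tδ - t²(b - a)²/8` for every `t`, and
`t = 4δ/(b - a)²` gives `KL(α‖β) ≥ 2(δ/(b - a))²`. Apply this at each state-action pair to the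
reward, with mean difference `x`, and to the value at the next state, with mean difference `z`.
If `V` takes values in an interval of length `B`, Cauchy–Schwarz gives
`(x + γz)² ≤ (1 + (γB)²)(x² + (z/B)²)`, and linearity identifies `x + γz` with the inner product of
the feature and the parameter vector. Rewards in `[0, 1]` give `B = 1/(1 - γ)` for `V = V*`, where
`2/(1 + (γB)²) = 2(1 - γ)²/((1 - γ)² + γ²) ≥ 2(1 - γ)²`.
-/

section Divergence

variable {Ω : Type*} [MeasurableSpace Ω] {α β : Measure Ω}

lemma integral_sub_log_integral_exp_le_klDiv [IsProbabilityMeasure α] [SigmaFinite β] {f : Ω → ℝ}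
    (hf : Integrable f α) (hexp : Integrable (fun x => Real.exp (f x)) β) :
    ((∫ x, f x ∂α - Real.log (∫ x, Real.exp (f x) ∂β) : ℝ) : EReal) ≤ klDiv α β := by
  unfold klDiv
  split_ifs with h
  · obtain ⟨hac, hllr⟩ := h
    have : NeZero β := ⟨by
      rintro rfl
      exact NeZero.ne α (Measure.absolutelyContinuous_zero_iff.1 hac)⟩
    have : IsProbabilityMeasure (β.tilted f) := isProbabilityMeasure_tilted hexp
    have htilted : 0 ≤ ∫ x, llr α (β.tilted f) x ∂α := by
      rw [← InformationTheory.toReal_klDiv_of_measure_eq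
        (hac.trans (absolutelyContinuous_tilted hexp)) (by simp only [measure_univ])]
      exact ENNReal.toReal_nonneg
    rw [integral_llr_tilted_right hac hf hexp hllr] at htilted
    exact EReal.coe_le_coe (by linarith)
  · exact le_top

lemma cgf_le_of_mem_Icc [IsProbabilityMeasure β] {X : Ω → ℝ} {a b : ℝ} (hX : AEMeasurable X β)
    (hab : ∀ᵐ x ∂β, X x ∈ Set.Icc a b) (t : ℝ) :
    ProbabilityTheory.cgf X β t ≤ t * ∫ x, X x ∂β + t ^ 2 * (b - a) ^ 2 / 8 := by
  have hcentred := (ProbabilityTheory.hasSubgaussianMGF_of_mem_Icc hX hab).mgf_le t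
  have hshift := ProbabilityTheory.mgf_add_const (μ := β) (t := t)
    (X := fun x => X x - ∫ y, X y ∂β) (∫ y, X y ∂β)
  simp only [sub_add_cancel] at hshift
  have hpos : 0 < ProbabilityTheory.mgf X β t := ProbabilityTheory.mgf_pos
    (ProbabilityTheory.integrable_exp_mul_of_mem_Icc hX hab)
  rw [ProbabilityTheory.cgf, Real.log_le_iff_le_exp hpos, hshift, add_comm, Real.exp_add]
  refine mul_le_mul_of_nonneg_right (hcentred.trans_eq ?_) (Real.exp_pos _).le
  congr 1
  push_cast
  rw [Real.norm_eq_abs, div_pow, sq_abs]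
  ring

lemma two_mul_integral_sub_div_sq_le_klDiv [IsProbabilityMeasure α] [IsProbabilityMeasure β]
    {X : Ω → ℝ} {a b : ℝ} (hlt : a < b) (hX : AEMeasurable X β)
    (hab : ∀ᵐ x ∂β, X x ∈ Set.Icc a b) :
    ((2 * ((∫ x, X x ∂α - ∫ x, X x ∂β) / (b - a)) ^ 2 : ℝ) : EReal) ≤ klDiv α β := by
  by_cases hac : α ≪ β
  · set δ := ∫ x, X x ∂α - ∫ x, X x ∂β with hδ
    set t := 4 * δ / (b - a) ^ 2 with ht
    have hint : Integrable X α := .of_mem_Icc a b (hX.mono_ac hac) (hac.ae_le hab)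
    refine le_trans (EReal.coe_le_coe ?_) (integral_sub_log_integral_exp_le_klDiv
      (hint.const_mul t) (ProbabilityTheory.integrable_exp_mul_of_mem_Icc hX hab))
    calc 2 * (δ / (b - a)) ^ 2
        = t * δ - t ^ 2 * (b - a) ^ 2 / 8 := by
          have : b - a ≠ 0 := (sub_pos.2 hlt).ne'
          rw [ht]
          field_simp
          ring
      _ = t * ∫ x, X x ∂α - (t * ∫ x, X x ∂β + t ^ 2 * (b - a) ^ 2 / 8) := by rw [hδ]; ring
      _ ≤ ∫ x, t * X x ∂α - ProbabilityTheory.cgf X β t := by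
          rw [integral_const_mul]
          exact sub_le_sub_left (cgf_le_of_mem_Icc hX hab t) _
  · simp only [klDiv, hac, false_and, if_false, le_top]

end Divergence

section FiniteDivergence

variable {S : Type*} [MeasurableSpace S]

lemma absolutelyContinuous_iff_real_singleton [Countable S] {α β : Measure S}
    [IsFiniteMeasure α] [IsFiniteMeasure β] : α ≪ β ↔ ∀ s, β.real {s} = 0 → α.real {s} = 0 := by
  simp only [measureReal_def, ENNReal.toReal_eq_zero_iff, measure_ne_top, or_false]
  refine ⟨fun hac s hs => hac hs, fun h t ht => ?_⟩
  rw [← Set.biUnion_of_singleton t, measure_biUnion_null_iff t.to_countable] at ht ⊢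
  exact fun s hs => h s (ht s hs)

variable [MeasurableSingletonClass S]

lemma toReal_rnDeriv_mul_real_singleton {α β : Measure S} [IsFiniteMeasure α] [SigmaFinite β]
    (hac : α ≪ β) (s : S) : (α.rnDeriv β s).toReal * β.real {s} = α.real {s} := by
  rw [measureReal_def, measureReal_def, ← Measure.setLIntegral_rnDeriv hac {s},
    lintegral_singleton, ENNReal.toReal_mul]

variable [Fintype S]

lemma klDiv_eq_klFin_real_singleton (α β : Measure S) [IsFiniteMeasure α] [IsFiniteMeasure β] :
    klDiv α β = klFin (fun s => α.real {s}) fun s => β.real {s} := by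
  unfold klDiv klFin
  simp only [Integrable.of_finite, and_true, absolutelyContinuous_iff_real_singleton]
  split_ifs with hac
  · rw [integral_fintype .of_finite]
    refine congrArg _ (Finset.sum_congr rfl fun s _ => ?_)
    rw [llr, smul_eq_mul,
      ← toReal_rnDeriv_mul_real_singleton (absolutelyContinuous_iff_real_singleton.2 hac) s]
    rcases eq_or_ne (β.real {s}) 0 with hs | hs
    · simp only [hs, mul_zero, zero_mul]
    · rw [mul_div_cancel_right₀ _ hs]
  · rfl

lemma exists_isProbabilityMeasure_real_singleton {p : S → ℝ} (hp : p ∈ stdSimplex ℝ S) :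
    ∃ α : Measure S, IsProbabilityMeasure α ∧ ∀ s, α.real {s} = p s := by
  have hsum : ∑ s, ENNReal.ofReal (p s) = 1 := by
    rw [← ENNReal.ofReal_sum_of_nonneg fun s _ => hp.1 s, hp.2, ENNReal.ofReal_one]
  refine ⟨(PMF.ofFintype _ hsum).toMeasure, inferInstance, fun s => ?_⟩
  rw [measureReal_def, PMF.toMeasure_apply_singleton _ _ (measurableSet_singleton s),
    PMF.ofFintype_apply, ENNReal.toReal_ofReal (hp.1 s)]

end FiniteDivergence

lemma two_mul_sum_sub_div_sq_le_klFin {S : Type*} [Fintype S] {p p' V : S → ℝ} {a b : ℝ}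
    (hp : p ∈ stdSimplex ℝ S) (hp' : p' ∈ stdSimplex ℝ S) (hlt : a < b)
    (hV : ∀ s, V s ∈ Set.Icc a b) :
    ((2 * ((∑ s, p s * V s - ∑ s, p' s * V s) / (b - a)) ^ 2 : ℝ) : EReal) ≤ klFin p p' := by
  let _ : MeasurableSpace S := ⊤
  obtain ⟨α, _, hα⟩ := exists_isProbabilityMeasure_real_singleton hp
  obtain ⟨β, _, hβ⟩ := exists_isProbabilityMeasure_real_singleton hp'
  have hpinsker := two_mul_integral_sub_div_sq_le_klDiv (α := α) (β := β) hlt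
    (measurable_from_top (f := V)).aemeasurable (ae_of_all _ hV)
  rw [klDiv_eq_klFin_real_singleton, integral_fintype .of_finite, integral_fintype .of_finite]
    at hpinsker
  simpa only [hα, hβ, smul_eq_mul] using hpinsker

section Value

variable {S : Type*} [Fintype S] {P : S → S → ℝ} {V : S → ℝ} {γ c : ℝ}

lemma le_one_sub_mul_of_add_mul_sum_le (hP : ∀ s, P s ∈ stdSimplex ℝ S)
    (hγ : γ ∈ Set.Icc (0 : ℝ) 1) (hV : ∀ s, c + γ * ∑ s', P s s' * V s' ≤ V s) (s : S) :
    c ≤ (1 - γ) * V s := by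
  have : Nonempty S := ⟨s⟩
  obtain ⟨s₀, hmin⟩ := Finite.exists_min V
  have hmean : V s₀ ≤ ∑ s', P s₀ s' * V s' :=
    (convex_Ici (V s₀)).sum_mem (fun s' _ => (hP s₀).1 s') (hP s₀).2 fun s' _ => hmin s'
  calc c ≤ V s₀ - γ * ∑ s', P s₀ s' * V s' := le_sub_iff_add_le.2 (hV s₀)
    _ ≤ V s₀ - γ * V s₀ := sub_le_sub_left (mul_le_mul_of_nonneg_left hmean hγ.1) _
    _ = (1 - γ) * V s₀ := by ring
    _ ≤ (1 - γ) * V s := mul_le_mul_of_nonneg_left (hmin s) (sub_nonneg.2 hγ.2)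

lemma one_sub_mul_le_of_le_add_mul_sum (hP : ∀ s, P s ∈ stdSimplex ℝ S)
    (hγ : γ ∈ Set.Icc (0 : ℝ) 1) (hV : ∀ s, V s ≤ c + γ * ∑ s', P s s' * V s') (s : S) :
    (1 - γ) * V s ≤ c := by
  have hneg : -c ≤ (1 - γ) * -V s := by
    refine le_one_sub_mul_of_add_mul_sum_le (V := fun s => -V s) hP hγ (fun s => ?_) s
    simp only [mul_neg, Finset.sum_neg_distrib]
    linarith [hV s]
  linarith

lemma optimalValue_mem_Icc {A : Type*} [Fintype A] [Nonempty A] {l u : ℝ}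
    {p : S → A → S → ℝ} {r Q : S → A → ℝ} (hγ : γ ∈ Set.Ico (0 : ℝ) 1)
    (hp : ∀ s a, p s a ∈ stdSimplex ℝ S) (hr : ∀ s a, r s a ∈ Set.Icc l u)
    (hQ : ∀ s a, Q s a = r s a + γ * ∑ s', p s a s' * V s')
    (hV : ∀ s, V s = univ.sup' univ_nonempty fun a => Q s a) (s : S) :
    V s ∈ Set.Icc (l / (1 - γ)) (u / (1 - γ)) := by
  have hpos : 0 < 1 - γ := sub_pos.2 hγ.2
  rw [Set.mem_Icc, div_le_iff₀' hpos, le_div_iff₀' hpos]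
  have hγ' := Set.Ico_subset_Icc_self hγ
  have hgreedy : ∀ s, ∃ a, V s = Q s a := fun s =>
    let ⟨a, _, ha⟩ := Finset.exists_mem_eq_sup' univ_nonempty fun a => Q s a
    ⟨a, (hV s).trans ha⟩
  choose π hπ using hgreedy
  have hbellman : ∀ s, V s = r s (π s) + γ * ∑ s', p s (π s) s' * V s' :=
    fun s => (hπ s).trans (hQ s (π s))
  constructor
  · refine le_one_sub_mul_of_add_mul_sum_le (fun s => hp s (π s)) hγ' (fun s => ?_) s
    linarith [hbellman s, (hr s (π s)).1]
  · refine one_sub_mul_le_of_le_add_mul_sum (fun s => hp s (π s)) hγ' (fun s => ?_) s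
    linarith [hbellman s, (hr s (π s)).2]

end Value

/-- The weighted second-moment matrix `Λ(ω) = ∑ ω(k) φ(k) φ(k)ᵀ` of a feature map. -/
def designMatrix {K ι R : Type*} [Fintype K] [CommSemiring R] (ω : K → R)
    (φ : K → ι → R) : Matrix ι ι R :=
  ∑ k, ω k • vecMulVec (φ k) (φ k)

lemma dotProduct_designMatrix_mulVec {K ι R : Type*} [Fintype K] [Fintype ι] [CommSemiring R]
    (ω : K → R) (φ : K → ι → R) (v : ι → R) :
    v ⬝ᵥ designMatrix ω φ *ᵥ v = ∑ k, ω k * (φ k ⬝ᵥ v) ^ 2 := by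
  rw [designMatrix, sum_mulVec, dotProduct_sum]
  refine Finset.sum_congr rfl fun k _ => ?_
  rw [smul_mulVec, dotProduct_smul, vecMulVec_mulVec, op_smul_eq_smul, dotProduct_smul,
    dotProduct_comm v, smul_eq_mul, smul_eq_mul, sq]

lemma dotProduct_designMatrix_mulVec_nonneg {K ι : Type*} [Fintype K] [Fintype ι] {ω : K → ℝ}
    (hω : ∀ k, 0 ≤ ω k) (φ : K → ι → ℝ) (v : ι → ℝ) : 0 ≤ v ⬝ᵥ designMatrix ω φ *ᵥ v := by
  rw [dotProduct_designMatrix_mulVec]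
  exact Finset.sum_nonneg fun k _ => mul_nonneg (hω k) (sq_nonneg _)

/-- The parameter `θ - θ' + γ ∑ (μ(s) - μ'(s)) V(s)` of the difference between the Bellman backups
of `V` in two linear MDPs. -/
def backupParamDiff {S ι R : Type*} [Fintype S] [CommRing R] (γ : R) (θ θ' : ι → R)
    (μ μ' : S → ι → R) (V : S → R) : ι → R :=
  fun i => θ i - θ' i + γ * ∑ s, (μ s i - μ' s i) * V s

lemma dotProduct_backupParamDiff {S ι R : Type*} [Fintype S] [Fintype ι] [CommRing R] (γ : R)
    (x θ θ' : ι → R) (μ μ' : S → ι → R) (V : S → R) :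
    x ⬝ᵥ backupParamDiff γ θ θ' μ μ' V = x ⬝ᵥ θ - x ⬝ᵥ θ' +
      γ * (∑ s, x ⬝ᵥ μ s * V s - ∑ s, x ⬝ᵥ μ' s * V s) := by
  have hvec : backupParamDiff γ θ θ' μ μ' V = θ - θ' + γ • ∑ s, V s • (μ s - μ' s) := by
    ext i
    simp only [backupParamDiff, Pi.add_apply, Pi.sub_apply, Pi.smul_apply, Finset.sum_apply,
      smul_eq_mul, mul_comm]
  simp only [hvec, dotProduct_add, dotProduct_sub, dotProduct_smul, dotProduct_sum, smul_eq_mul,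
    ← Finset.sum_sub_distrib, mul_sub, mul_comm]

lemma two_div_mul_add_mul_sq_le (x y κ : ℝ) :
    2 / (1 + κ ^ 2) * (x + κ * y) ^ 2 ≤ 2 * x ^ 2 + 2 * y ^ 2 := by
  rw [div_mul_eq_mul_div, div_le_iff₀ (by positivity)]
  linarith [sq_nonneg (κ * x - y)]

lemma ereal_coe_sum {κ : Type*} (s : Finset κ) (f : κ → ℝ) :
    ((∑ k ∈ s, f k : ℝ) : EReal) = ∑ k ∈ s, (f k : EReal) :=
  map_sum (⟨⟨Real.toEReal, rfl⟩, EReal.coe_add⟩ : ℝ →+ EReal) f s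

lemma two_div_mul_sq_le_klDiv_add_klFin {S : Type*} [Fintype S] {q q' : Measure ℝ}
    [IsProbabilityMeasure q] [IsProbabilityMeasure q'] (hsupp' : ∀ᵐ x ∂q', x ∈ Set.Icc (0 : ℝ) 1)
    {p p' V : S → ℝ} (hp : p ∈ stdSimplex ℝ S) (hp' : p' ∈ stdSimplex ℝ S) {a b : ℝ}
    (hlt : a < b) (hV : ∀ s, V s ∈ Set.Icc a b) (γ : ℝ) :
    ((2 / (1 + (γ * (b - a)) ^ 2) * (∫ x, x ∂q - ∫ x, x ∂q' +
        γ * (∑ s, p s * V s - ∑ s, p' s * V s)) ^ 2 : ℝ) : EReal) ≤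
      klDiv q q' + klFin p p' := by
  have hreward := two_mul_integral_sub_div_sq_le_klDiv (α := q) zero_lt_one aemeasurable_id hsupp'
  have htransition := two_mul_sum_sub_div_sq_le_klFin hp hp' hlt hV
  simp only [id_eq, sub_zero, div_one] at hreward
  refine le_trans ?_ (add_le_add hreward htransition)
  rw [← EReal.coe_add, EReal.coe_le_coe_iff]
  refine le_of_eq_of_le ?_ (two_div_mul_add_mul_sq_le _ _ (γ * (b - a)))
  rw [mul_assoc γ, mul_div_cancel₀ _ (sub_pos.2 hlt).ne']

/-- `K` is the set of state-action pairs. -/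
theorem stmt_14_general {K S ι : Type*} [Fintype K] [Fintype S] [Fintype ι] (φ : K → ι → ℝ)
    (γ : ℝ) {p p' : K → S → ℝ} (hp : ∀ k, p k ∈ stdSimplex ℝ S)
    (hp' : ∀ k, p' k ∈ stdSimplex ℝ S) (θ θ' : ι → ℝ) (μ μ' : S → ι → ℝ)
    (hP : ∀ k s, p k s = φ k ⬝ᵥ μ s) (hP' : ∀ k s, p' k s = φ k ⬝ᵥ μ' s)
    {q q' : K → Measure ℝ} [∀ k, IsProbabilityMeasure (q k)] [∀ k, IsProbabilityMeasure (q' k)]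
    (hsupp' : ∀ k, ∀ᵐ x ∂q' k, x ∈ Set.Icc (0 : ℝ) 1)
    (hmean : ∀ k, ∫ x, x ∂q k = φ k ⬝ᵥ θ) (hmean' : ∀ k, ∫ x, x ∂q' k = φ k ⬝ᵥ θ')
    {V : S → ℝ} {a b : ℝ} (hlt : a < b) (hV : ∀ s, V s ∈ Set.Icc a b)
    {ω : K → ℝ} (hω : ∀ k, 0 ≤ ω k) :
    ((2 / (1 + (γ * (b - a)) ^ 2) * (backupParamDiff γ θ θ' μ μ' V ⬝ᵥ
        designMatrix ω φ *ᵥ backupParamDiff γ θ θ' μ μ' V) : ℝ) : EReal) ≤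
      ∑ k, (ω k : EReal) * (klDiv (q k) (q' k) + klFin (p k) (p' k)) := by
  rw [dotProduct_designMatrix_mulVec, Finset.mul_sum, ereal_coe_sum]
  refine Finset.sum_le_sum fun k _ => ?_
  rw [mul_left_comm, EReal.coe_mul, dotProduct_backupParamDiff]
  simp only [← hmean, ← hmean', ← hP, ← hP']
  exact mul_le_mul_of_nonneg_left
    (two_div_mul_sq_le_klDiv_add_klFin (hsupp' k) (hp k) (hp' k) hlt hV γ)
    (EReal.coe_nonneg.2 (hω k))

lemma six_fifths_mul_sq_le_two_div {γ : ℝ} (hγ : γ ∈ Set.Ico (0 : ℝ) 1) :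
    6 * (1 - γ) ^ 2 / 5 ≤ 2 / (1 + (γ * (1 / (1 - γ))) ^ 2) := by
  obtain ⟨hγ0, hγ1⟩ := hγ
  have hne : 1 - γ ≠ 0 := (sub_pos.2 hγ1).ne'
  rw [le_div_iff₀ (by positivity)]
  calc 6 * (1 - γ) ^ 2 / 5 * (1 + (γ * (1 / (1 - γ))) ^ 2)
      = 6 / 5 * (1 - 2 * (γ * (1 - γ))) := by field_simp; ring
    _ ≤ 2 := by linarith [mul_nonneg hγ0 (sub_nonneg.2 hγ1.le)]

theorem stmt_14 {S A : Type*} [Fintype S] [Fintype A] [Nonempty S] [Nonempty A]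
    {d : ℕ} (φ : S → A → Fin d → ℝ) (γ : ℝ) (hγ : γ ∈ Set.Ioo (0 : ℝ) 1)
    (p p' : S → A → S → ℝ) (r r' : S → A → ℝ)
    (hp0 : ∀ s a s', 0 ≤ p s a s') (hp1 : ∀ s a, ∑ s', p s a s' = 1)
    (hp0' : ∀ s a s', 0 ≤ p' s a s') (hp1' : ∀ s a, ∑ s', p' s a s' = 1)
    (θ θ' : Fin d → ℝ) (μ μ' : S → Fin d → ℝ)
    (hr : ∀ s a, r s a = φ s a ⬝ᵥ θ) (hP : ∀ s a s', p s a s' = φ s a ⬝ᵥ μ s')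
    (hr' : ∀ s a, r' s a = φ s a ⬝ᵥ θ') (hP' : ∀ s a s', p' s a s' = φ s a ⬝ᵥ μ' s')
    -- reward distributions, supported on [0,1], with means r and r'
    (q q' : S → A → Measure ℝ)
    (hq : ∀ s a, IsProbabilityMeasure (q s a))
    (hq' : ∀ s a, IsProbabilityMeasure (q' s a))
    (hqsupp : ∀ s a, q s a (Set.Icc (0 : ℝ) 1)ᶜ = 0)
    (hqsupp' : ∀ s a, q' s a (Set.Icc (0 : ℝ) 1)ᶜ = 0)
    (hqmean : ∀ s a, (∫ x, x ∂q s a) = r s a)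
    (hqmean' : ∀ s a, (∫ x, x ∂q' s a) = r' s a)
    -- optimal value functions of M
    (Vstar : S → ℝ) (Qstar : S → A → ℝ)
    (hQstar : ∀ s a, Qstar s a = r s a + γ * ∑ s', p s a s' * Vstar s')
    (hVstar : ∀ s, Vstar s = univ.sup' univ_nonempty fun a => Qstar s a)
    -- a probability vector on S × A
    (ω : S × A → ℝ) (hω0 : ∀ sa, 0 ≤ ω sa) (hω1 : ∑ sa, ω sa = 1) :
    (((6 * (1 - γ) ^ 2 / 5) *
        ((fun i => θ i - θ' i + γ * ∑ s', (μ s' i - μ' s' i) * Vstar s') ⬝ᵥ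
          (∑ sa : S × A, ω sa • vecMulVec (φ sa.1 sa.2) (φ sa.1 sa.2)).mulVec
            fun i => θ i - θ' i + γ * ∑ s', (μ s' i - μ' s' i) * Vstar s') : ℝ) : EReal) ≤
      ∑ sa : S × A, ((ω sa : ℝ) : EReal) *
        (klDiv (q sa.1 sa.2) (q' sa.1 sa.2) +
          klFin (p sa.1 sa.2) (p' sa.1 sa.2)) := by
  have hr01 : ∀ s a, r s a ∈ Set.Icc (0 : ℝ) 1 := fun s a => hqmean s a ▸
    (convex_Icc 0 1).integral_mem isClosed_Icc (hqsupp s a)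
      (.of_mem_Icc 0 1 aemeasurable_id (hqsupp s a))
  have hγ' := Set.Ioo_subset_Ico_self hγ
  have hV := optimalValue_mem_Icc hγ' (fun s a => ⟨hp0 s a, hp1 s a⟩) hr01 hQstar hVstar
  simp only [zero_div] at hV
  have hkl := stmt_14_general (fun sa : S × A => φ sa.1 sa.2) γ
    (fun sa => ⟨hp0 sa.1 sa.2, hp1 sa.1 sa.2⟩) (fun sa => ⟨hp0' sa.1 sa.2, hp1' sa.1 sa.2⟩)
    θ θ' μ μ' (fun sa => hP sa.1 sa.2) (fun sa => hP' sa.1 sa.2)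
    (q := fun sa => q sa.1 sa.2) (fun sa => hqsupp' sa.1 sa.2)
    (fun sa => (hqmean sa.1 sa.2).trans (hr sa.1 sa.2))
    (fun sa => (hqmean' sa.1 sa.2).trans (hr' sa.1 sa.2))
    (one_div_pos.2 (sub_pos.2 hγ.2)) hV hω0
  rw [sub_zero] at hkl
  exact (EReal.coe_le_coe (mul_le_mul_of_nonneg_right
    (six_fifths_mul_sq_le_two_div hγ')
    (dotProduct_designMatrix_mulVec_nonneg hω0 _ _))).trans hkl
end
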